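/- Let a ≥ 0 and let (q,r) be an a-admissible pair, with conjugate exponents q', r'. There exists a constant C(a,r) > 0 such that for every F ∈ 𝕊⁺, the function T_a(F)(x) = ∫_ℝ ∫₀^∞ S_a(x,y,−t) F(y,t) y^a dy dt satisfies ‖T_a(F)‖_{L²_a} ≤ C(a,r) ‖F‖_{L^{q'}_t L^{r'}_a}. -/

import Mathlib

open MeasureTheory Filter Set

noncomputable def besselJ (ν : ℂ) (z : ℝ) : ℂ :=
  ∑' k : ℕ, ((-1 : ℂ) ^ k / (Complex.Gamma (k + 1) * Complex.Gamma (ν + k + 1))) *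
    ((z : ℂ) / 2) ^ (2 * (k : ℂ) + ν)

noncomputable def Skernel (a x y t : ℝ) : ℂ :=
  if 0 < t then
    Complex.exp (-(Complex.I) * (((a + 1) * Real.pi / 4 : ℝ) : ℂ)) *
      (((2 * |t|) ^ (-(a + 1) / 2) : ℝ) : ℂ) *
      (((x * y / (2 * |t|)) ^ ((1 - a) / 2) : ℝ) : ℂ) *
      besselJ (((a - 1) / 2 : ℝ) : ℂ) (x * y / (2 * |t|)) *
      Complex.exp (Complex.I * ((((x ^ 2 + y ^ 2) / (4 * |t|)) : ℝ) : ℂ))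
  else
    Complex.exp ((Complex.I) * (((a + 1) * Real.pi / 4 : ℝ) : ℂ)) *
      (((2 * |t|) ^ (-(a + 1) / 2) : ℝ) : ℂ) *
      (((x * y / (2 * |t|)) ^ ((1 - a) / 2) : ℝ) : ℂ) *
      besselJ (((a - 1) / 2 : ℝ) : ℂ) (x * y / (2 * |t|)) *
      Complex.exp (-(Complex.I) * ((((x ^ 2 + y ^ 2) / (4 * |t|)) : ℝ) : ℂ))

noncomputable def LrA (a r : ℝ) (f : ℝ → ℂ) : ℝ :=
  (∫ x in Ioi (0:ℝ), ‖f x‖ ^ r * x ^ a) ^ (1 / r)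

noncomputable def mixedNorm (a q r : ℝ) (u : ℝ → ℝ → ℂ) : ℝ :=
  (∫ t : ℝ, LrA a r (fun x => u x t) ^ q) ^ (1 / q)

def Admissible (a q r : ℝ) : Prop :=
  2 < r ∧ (1 < a → r < 2 * (a + 1) / (a - 1)) ∧ 2 / q = (a + 1) * (1 / 2 - 1 / r)

noncomputable def DxIter : ℕ → (ℝ → ℝ → ℂ) → (ℝ → ℝ → ℂ)
  | 0, F => F
  | k + 1, F => fun x t => (1 / (x : ℂ)) * deriv (fun x' => DxIter k F x' t) x

noncomputable def DtIter (l : ℕ) (F : ℝ → ℝ → ℂ) : ℝ → ℝ → ℂ :=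
  fun x t => iteratedDeriv l (fun t' => F x t') t

def SPlusT (F : ℝ → ℝ → ℂ) : Prop :=
  ContDiffOn ℝ (⊤ : ℕ∞) (fun p : ℝ × ℝ => F p.1 p.2) (Ioi 0 ×ˢ univ) ∧
  ∀ p : ℕ, ∃ C : ℝ, ∀ k l : ℕ, k + l ≤ p → ∀ x > (0:ℝ), ∀ t : ℝ,
    (1 + x ^ 2 + t ^ 2) ^ ((p : ℝ) / 2) * ‖DxIter k (DtIter l F) x t‖ ≤ C

/-- The entire function `∑ u ^ k / (k! Γ(k + b))`. -/
noncomputable def besselE (b : ℝ) (u : ℂ) : ℂ :=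
  ∑' k : ℕ, u ^ k / ((k.factorial : ℂ) * (Real.Gamma (k + b) : ℂ))

theorem exists_inv_Gamma_nat_add_le {b : ℝ} (hb : 0 < b) :
    ∃ M > 0, ∀ k : ℕ, (Real.Gamma (k + b))⁻¹ ≤ M := by
  have hG : ∀ k : ℕ, Real.Gamma (b + 1) ≤ Real.Gamma ((k + 1 : ℕ) + b) := by
    intro k
    induction k with
    | zero => simp [add_comm]
    | succ k ih =>
      have h : ((k + 1 + 1 : ℕ) : ℝ) + b = ((k + 1 : ℕ) + b) + 1 := by push_cast; ring
      have hpos : (0 : ℝ) < ((k + 1 : ℕ) : ℝ) + b := by positivity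
      rw [h, Real.Gamma_add_one hpos.ne']
      have h1 : (1 : ℝ) ≤ ((k + 1 : ℕ) : ℝ) + b := by
        push_cast; have : (0 : ℝ) ≤ k := by positivity
        linarith
      nlinarith [Real.Gamma_pos_of_pos hpos]
  have h0 := Real.Gamma_pos_of_pos hb
  have h1 := Real.Gamma_pos_of_pos (show 0 < b + 1 by linarith)
  refine ⟨(Real.Gamma b)⁻¹ + (Real.Gamma (b + 1))⁻¹, by positivity, fun k => ?_⟩
  cases k with
  | zero => simp only [Nat.cast_zero, zero_add]; have := inv_pos.2 h1; linarith
  | succ k =>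
    have := inv_anti₀ h1 (hG k)
    have := inv_pos.2 h0
    linarith

theorem norm_besselE_term (b : ℝ) (hb : 0 < b) (u : ℂ) (k : ℕ) :
    ‖u ^ k / ((k.factorial : ℂ) * (Real.Gamma (k + b) : ℂ))‖ =
      ‖u‖ ^ k / (k.factorial * Real.Gamma (k + b)) := by
  have hpos : (0 : ℝ) < (k : ℝ) + b := by positivity
  simp [abs_of_pos (Real.Gamma_pos_of_pos hpos)]

theorem summable_norm_besselE_term {b : ℝ} (hb : 0 < b) (x : ℝ) :
    Summable fun k : ℕ => x ^ k / (k.factorial * Real.Gamma (k + b)) := by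
  obtain ⟨M, hM, h⟩ := exists_inv_Gamma_nat_add_le hb
  refine Summable.of_norm_bounded ((Real.summable_pow_div_factorial |x|).mul_left M) fun k => ?_
  have hpos : (0 : ℝ) < (k : ℝ) + b := by positivity
  have hG := Real.Gamma_pos_of_pos hpos
  have : ‖x ^ k / (k.factorial * Real.Gamma (k + b))‖ =
      (Real.Gamma (k + b))⁻¹ * (|x| ^ k / k.factorial) := by
    rw [norm_div, norm_mul, norm_pow, Real.norm_eq_abs, Real.norm_eq_abs, Real.norm_eq_abs,
      abs_of_pos hG, Nat.abs_cast]
    field_simp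
  rw [this]
  gcongr
  exact h k

theorem summable_besselE {b : ℝ} (hb : 0 < b) (u : ℂ) :
    Summable fun k : ℕ => u ^ k / ((k.factorial : ℂ) * (Real.Gamma (k + b) : ℂ)) := by
  refine Summable.of_norm ?_
  simp_rw [norm_besselE_term b hb]
  exact summable_norm_besselE_term hb _

theorem besselE_zero (b : ℝ) : besselE b 0 = ((Real.Gamma b)⁻¹ : ℝ) := by
  rw [besselE, tsum_eq_single 0]
  · simp
  · intro k hk; simp [hk]

theorem besselE_ofReal (b x : ℝ) :
    besselE b x = ((∑' k : ℕ, x ^ k / (k.factorial * Real.Gamma (k + b)) : ℝ) : ℂ) := by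
  rw [besselE, Complex.ofReal_tsum]
  push_cast
  rfl

theorem hasDerivAt_besselE {b : ℝ} (hb : 0 < b) (u : ℂ) :
    HasDerivAt (besselE b) (besselE (b + 1) u) u := by
  have key : ∀ k : ℕ, ∀ y : ℂ,
      HasDerivAt (fun z : ℂ => z ^ k / ((k.factorial : ℂ) * (Real.Gamma (k + b) : ℂ)))
        (k * y ^ (k - 1) / ((k.factorial : ℂ) * (Real.Gamma (k + b) : ℂ))) y := fun k y =>
    (hasDerivAt_pow k y).div_const _
  have hshift : ∀ y : ℂ, ∀ k : ℕ,
      ((k + 1 : ℕ) : ℂ) * y ^ (k + 1 - 1) /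
          (((k + 1).factorial : ℂ) * (Real.Gamma ((k + 1 : ℕ) + b) : ℂ)) =
        y ^ k / ((k.factorial : ℂ) * (Real.Gamma (k + (b + 1)) : ℂ)) := by
    intro y k
    have hpos : (0 : ℝ) < (k : ℝ) + (b + 1) := by positivity
    have hG : (Real.Gamma (k + (b + 1)) : ℂ) ≠ 0 := by
      exact_mod_cast (Real.Gamma_pos_of_pos hpos).ne'
    have e : (((k + 1 : ℕ) : ℝ) + b) = k + (b + 1) := by push_cast; ring
    have h1 : ((k : ℂ) + 1) ≠ 0 := by exact_mod_cast (Nat.succ_ne_zero k)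
    have h2 : (k.factorial : ℂ) ≠ 0 := by exact_mod_cast k.factorial_ne_zero
    rw [e, Nat.factorial_succ]
    push_cast
    field_simp
  have hsum : ∀ R : ℝ, Summable fun k : ℕ =>
      (k : ℝ) * R ^ (k - 1) / (k.factorial * Real.Gamma (k + b)) := by
    intro R
    rw [← summable_nat_add_iff 1]
    refine (summable_norm_besselE_term (show 0 < b + 1 by linarith) R).congr fun k => ?_
    have := hshift R k
    exact_mod_cast this.symm
  have hd := hasDerivAt_tsum_of_isPreconnected (𝕜 := ℂ)
    (g := fun (k : ℕ) (z : ℂ) => z ^ k / ((k.factorial : ℂ) * (Real.Gamma (k + b) : ℂ)))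
    (g' := fun (k : ℕ) (y : ℂ) =>
      k * y ^ (k - 1) / ((k.factorial : ℂ) * (Real.Gamma (k + b) : ℂ)))
    (hsum (‖u‖ + 1)) (Metric.isOpen_ball (x := (0 : ℂ)) (ε := ‖u‖ + 1))
    (convex_ball _ _).isPreconnected (fun k y _ => key k y) (fun k y hy => ?_)
    (y₀ := 0) (by simp; positivity) (summable_besselE hb 0) (y := u) (by simp)
  · convert! hd using 1
    rw [Summable.tsum_eq_zero_add]
    · simp only [hshift]
      simp [besselE]
    · rw [← summable_nat_add_iff 1]
      exact (summable_besselE (show 0 < b + 1 by linarith) u).congr fun k => (hshift u k).symm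
  · have hpos : (0 : ℝ) < (k : ℝ) + b := by positivity
    have hG := Real.Gamma_pos_of_pos hpos
    have hy' : ‖y‖ ≤ ‖u‖ + 1 := by simpa using (mem_ball_zero_iff.1 hy).le
    simp only [norm_div, norm_mul, norm_pow, Complex.norm_natCast, Complex.norm_real,
      Real.norm_eq_abs, abs_of_pos hG]
    gcongr

theorem continuous_besselE {b : ℝ} (hb : 0 < b) : Continuous (besselE b) :=
  continuous_iff_continuousAt.2 fun u => (hasDerivAt_besselE hb u).continuousAt

/-- The contiguous relation, equivalent to Bessel's differential equation. -/
theorem besselE_contiguous {b : ℝ} (hb : 0 < b) (u : ℂ) :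
    u * besselE (b + 2) u + b * besselE (b + 1) u = besselE b u := by
  have h1 := (summable_besselE (show 0 < b + 1 by linarith) u).hasSum
  have h2 := (summable_besselE (show 0 < b + 2 by linarith) u).hasSum
  have h0 := (summable_besselE hb u).hasSum
  have h2' : HasSum (fun k : ℕ => (k : ℂ) * (u ^ k /
      ((k.factorial : ℂ) * (Real.Gamma (k + (b + 1)) : ℂ)))) (u * besselE (b + 2) u) := by
    rw [← hasSum_nat_add_iff' 1]
    simp only [Finset.range_one, Finset.sum_singleton, Nat.cast_zero, zero_mul, sub_zero]
    refine (h2.mul_left u).congr_fun ?_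
    intro k
    have hpos : (0 : ℝ) < (k : ℝ) + (b + 2) := by positivity
    have hG : (Real.Gamma (k + (b + 2)) : ℂ) ≠ 0 := by
      exact_mod_cast (Real.Gamma_pos_of_pos hpos).ne'
    have e : (((k + 1 : ℕ) : ℝ) + (b + 1)) = k + (b + 2) := by push_cast; ring
    have h1 : ((k : ℂ) + 1) ≠ 0 := by exact_mod_cast (Nat.succ_ne_zero k)
    have h2 : (k.factorial : ℂ) ≠ 0 := by exact_mod_cast k.factorial_ne_zero
    rw [e, Nat.factorial_succ, pow_succ']
    push_cast
    field_simp
  refine (h2'.add (h1.mul_left (b : ℂ))).unique ?_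
  refine h0.congr_fun ?_
  intro k
  have hpos : (0 : ℝ) < (k : ℝ) + b := by positivity
  have hG : (Real.Gamma (k + b) : ℂ) ≠ 0 := by
    exact_mod_cast (Real.Gamma_pos_of_pos hpos).ne'
  have h2 : (k.factorial : ℂ) ≠ 0 := by exact_mod_cast k.factorial_ne_zero
  have h3 : (k : ℂ) + b ≠ 0 := by exact_mod_cast hpos.ne'
  rw [← add_assoc, Real.Gamma_add_one hpos.ne']
  push_cast
  field_simp

theorem norm_besselE_le {b : ℝ} (hb : 1 / 2 ≤ b) (ζ : ℂ) :
    ‖besselE b (ζ ^ 2 / 4)‖ ≤ (Real.Gamma b)⁻¹ * Real.exp |ζ.re| := by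
  have hb0 : 0 < b := by linarith
  set X : ℝ → ℂ := fun τ => besselE b (ζ ^ 2 / 4 * (τ : ℂ) ^ 2) with hX
  set Z : ℝ → ℂ := fun τ => besselE (b + 1) (ζ ^ 2 / 4 * (τ : ℂ) ^ 2) with hZ
  set Y : ℝ → ℂ := fun τ => ((τ / 2 : ℝ) : ℂ) * (ζ * Z τ) with hY
  have hin : ∀ τ : ℝ, HasDerivAt (fun τ : ℝ => ζ ^ 2 / 4 * (τ : ℂ) ^ 2)
      (ζ ^ 2 / 2 * τ) τ := by
    intro τ
    have h := ((Complex.ofRealCLM.hasDerivAt (x := τ)).pow 2).const_mul (ζ ^ 2 / 4)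
    convert! h using 1
    simp; ring
  have dX : ∀ τ, HasDerivAt X (ζ * Y τ) τ := by
    intro τ
    have h := (hasDerivAt_besselE hb0 (ζ ^ 2 / 4 * (τ : ℂ) ^ 2)).comp τ (hin τ)
    convert! h using 1
    simp only [hY, hZ]; push_cast; ring
  have dY : ∀ τ, HasDerivAt Y (ζ * (X τ - (b - 1 / 2) * Z τ)) τ := by
    intro τ
    have hZd := (hasDerivAt_besselE (show 0 < b + 1 by linarith)
      (ζ ^ 2 / 4 * (τ : ℂ) ^ 2)).comp τ (hin τ)
    have h := (((hasDerivAt_id τ).div_const 2).ofReal_comp).mul (hZd.const_mul ζ)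
    convert! h using 1
    have hc := besselE_contiguous hb0 (ζ ^ 2 / 4 * (τ : ℂ) ^ 2)
    have e : b + 1 + 1 = b + 2 := by ring
    rw [e]
    simp only [hX, hZ, Function.comp_apply, id, ← hc]
    push_cast
    ring
  set En : ℝ → ℝ := fun τ => Complex.normSq (X τ) + Complex.normSq (Y τ) with hEn
  have dN : ∀ (f : ℝ → ℂ) (f' : ℂ) (τ : ℝ), HasDerivAt f f' τ →
      HasDerivAt (fun τ => Complex.normSq (f τ)) (2 * (f' * (starRingEnd ℂ) (f τ)).re) τ := by
    intro f f' τ hf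
    have hre := (Complex.reCLM.hasFDerivAt.comp_hasDerivAt τ hf)
    have him := (Complex.imCLM.hasFDerivAt.comp_hasDerivAt τ hf)
    have h := (hre.mul hre).add (him.mul him)
    convert! h using 1
    simp [Complex.mul_re]; ring
  have dE : ∀ τ, HasDerivAt En (2 * (ζ * Y τ * (starRingEnd ℂ) (X τ)).re +
      2 * (ζ * (X τ - (b - 1 / 2) * Z τ) * (starRingEnd ℂ) (Y τ)).re) τ := fun τ =>
    (dN X _ τ (dX τ)).add (dN Y _ τ (dY τ))
  have bound : ∀ τ : ℝ, 0 ≤ τ → 2 * (ζ * Y τ * (starRingEnd ℂ) (X τ)).re +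
      2 * (ζ * (X τ - (b - 1 / 2) * Z τ) * (starRingEnd ℂ) (Y τ)).re ≤
        2 * |ζ.re| * En τ := by
    intro τ hτ
    have e1 : (ζ * (X τ - (b - 1 / 2) * Z τ) * (starRingEnd ℂ) (Y τ)).re =
        (ζ * X τ * (starRingEnd ℂ) (Y τ)).re -
          (b - 1 / 2) * (τ / 2) * (Complex.normSq ζ * Complex.normSq (Z τ)) := by
      have hb' : ((b : ℂ) - 1 / 2) = ((b - 1 / 2 : ℝ) : ℂ) := by push_cast; ring
      simp only [hY, hb', Complex.normSq_apply, Complex.mul_re, Complex.mul_im, Complex.sub_re,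
        Complex.sub_im, Complex.conj_re, Complex.conj_im, Complex.ofReal_re, Complex.ofReal_im]
      ring
    have e2 : (ζ * Y τ * (starRingEnd ℂ) (X τ)).re + (ζ * X τ * (starRingEnd ℂ) (Y τ)).re =
        2 * ζ.re * ((X τ).re * (Y τ).re + (X τ).im * (Y τ).im) := by
      simp; ring
    have e3 : 0 ≤ (b - 1 / 2) * (τ / 2) * (Complex.normSq ζ * Complex.normSq (Z τ)) := by
      have := Complex.normSq_nonneg ζ
      have := Complex.normSq_nonneg (Z τ)
      have : 0 ≤ b - 1 / 2 := by linarith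
      positivity
    have e4 : 2 * ζ.re * ((X τ).re * (Y τ).re + (X τ).im * (Y τ).im) ≤ |ζ.re| * En τ := by
      have h5 : |2 * ((X τ).re * (Y τ).re + (X τ).im * (Y τ).im)| ≤ En τ := by
        simp only [hEn, Complex.normSq_apply]
        rw [abs_le]
        constructor
        · nlinarith [sq_nonneg ((X τ).re + (Y τ).re), sq_nonneg ((X τ).im + (Y τ).im)]
        · nlinarith [sq_nonneg ((X τ).re - (Y τ).re), sq_nonneg ((X τ).im - (Y τ).im)]
      calc _ ≤ |ζ.re * (2 * ((X τ).re * (Y τ).re + (X τ).im * (Y τ).im))| := by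
            refine le_trans (le_of_eq ?_) (le_abs_self _); ring
        _ ≤ _ := by rw [abs_mul]; gcongr
    rw [e1]
    linarith
  have hanti : AntitoneOn (fun τ : ℝ => En τ * Real.exp (-(2 * |ζ.re|) * τ)) (Icc 0 1) := by
    have dG : ∀ τ, HasDerivAt (fun τ : ℝ => En τ * Real.exp (-(2 * |ζ.re|) * τ)) _ τ := fun τ =>
      (dE τ).mul (((hasDerivAt_id τ).const_mul (-(2 * |ζ.re|))).exp)
    refine antitoneOn_of_deriv_nonpos (convex_Icc 0 1)
      (fun τ _ => (dG τ).continuousAt.continuousWithinAt)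
      (fun τ _ => (dG τ).differentiableAt.differentiableWithinAt) (fun τ hτ => ?_)
    rw [interior_Icc] at hτ
    rw [(dG τ).deriv]
    have := bound τ hτ.1.le
    have h2 := Real.exp_pos (-(2 * |ζ.re|) * τ)
    simp only [id]
    nlinarith
  have h01 := hanti (left_mem_Icc.2 zero_le_one) (right_mem_Icc.2 zero_le_one) zero_le_one
  have hY0 : Y 0 = 0 := by simp [hY]
  have hX0 : X 0 = ((Real.Gamma b)⁻¹ : ℝ) := by simp only [hX]; rw [← besselE_zero]; simp
  have hX1 : X 1 = besselE b (ζ ^ 2 / 4) := by simp [hX]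
  have hG := inv_pos.2 (Real.Gamma_pos_of_pos hb0)
  simp only [hEn, hY0, hX0, map_zero, add_zero, mul_zero, Real.exp_zero, mul_one,
    Complex.normSq_ofReal, hX1] at h01
  have h3 : Complex.normSq (besselE b (ζ ^ 2 / 4)) * Real.exp (-(2 * |ζ.re|)) ≤
      (Real.Gamma b)⁻¹ * (Real.Gamma b)⁻¹ := by
    refine le_trans ?_ h01
    gcongr
    have := Complex.normSq_nonneg (Y 1)
    linarith
  refine abs_le_of_sq_le_sq' ?_ (by positivity) |>.2
  rw [Complex.sq_norm]
  have h4 : Real.exp (-(2 * |ζ.re|)) * (Real.exp |ζ.re|) ^ 2 = 1 := by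
    rw [← Real.exp_nat_mul, ← Real.exp_add]; simp
  calc _ = Complex.normSq (besselE b (ζ ^ 2 / 4)) *
        (Real.exp (-(2 * |ζ.re|)) * (Real.exp |ζ.re|) ^ 2) := by rw [h4, mul_one]
    _ = (Complex.normSq (besselE b (ζ ^ 2 / 4)) * Real.exp (-(2 * |ζ.re|))) *
        (Real.exp |ζ.re|) ^ 2 := by ring
    _ ≤ (Real.Gamma b)⁻¹ * (Real.Gamma b)⁻¹ * (Real.exp |ζ.re|) ^ 2 := by gcongr
    _ = _ := by ring

theorem ring_choose_eq_Gamma {c : ℝ} (hc : 0 < c) (n : ℕ) :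
    Ring.choose (c + n - 1) n = Real.Gamma (c + n) / (n.factorial * Real.Gamma c) := by
  have h : ∀ n : ℕ, (ascPochhammer ℝ n).eval c * Real.Gamma c = Real.Gamma (c + n) := by
    intro n
    induction n with
    | zero => simp
    | succ n ih =>
      have hpos : 0 < c + n := by positivity
      have e : c + ((n + 1 : ℕ) : ℝ) = c + n + 1 := by push_cast; ring
      rw [ascPochhammer_succ_eval, e, Real.Gamma_add_one hpos.ne', ← ih]
      ring
  have h1 := Ring.factorial_nsmul_multichoose_eq_ascPochhammer c n
  rw [Ring.multichoose_eq, Polynomial.ascPochhammer_smeval_eq_eval, nsmul_eq_mul] at h1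
  have hG := Real.Gamma_pos_of_pos hc
  have hf : (n.factorial : ℝ) ≠ 0 := by exact_mod_cast n.factorial_ne_zero
  rw [eq_div_iff (by positivity), ← h n, ← h1]
  ring

/-- A form of the Chu–Vandermonde identity. -/
theorem Gamma_vandermonde {b : ℝ} (hb : 0 < b) (k l : ℕ) :
    ∑ m ∈ Finset.range (l + 1), (if m ≤ k then
      ((m.factorial * Real.Gamma (m + b)) * (k - m).factorial * (l - m).factorial)⁻¹ else 0) =
      Real.Gamma (k + l + b) /
        ((k.factorial * Real.Gamma (k + b)) * (l.factorial * Real.Gamma (l + b))) := by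
  have key := Ring.add_choose_eq (r := b + l - 1) (s := (k : ℝ)) l (Commute.all _ _)
  rw [Finset.Nat.sum_antidiagonal_eq_sum_range_succ_mk] at key
  rw [← Finset.sum_range_reflect] at key
  have e1 : b + l - 1 + k = (b + k) + l - 1 := by ring
  rw [e1, ring_choose_eq_Gamma (by positivity)] at key
  have hGl : 0 < Real.Gamma (l + b) := Real.Gamma_pos_of_pos (by positivity)
  have hGk : 0 < Real.Gamma (k + b) := Real.Gamma_pos_of_pos (by positivity)
  have e2 : b + k + l = k + l + b := by ring
  have e3 : b + k = k + b := by ring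
  rw [e2, e3] at key
  have e4 : Real.Gamma (k + l + b) /
        ((k.factorial * Real.Gamma (k + b)) * (l.factorial * Real.Gamma (l + b))) =
      (Real.Gamma (k + l + b) / (l.factorial * Real.Gamma (k + b))) *
        (k.factorial * Real.Gamma (l + b))⁻¹ := by field_simp
  rw [e4, key, Finset.sum_mul]
  refine Finset.sum_congr rfl fun m hm => ?_
  have hml : m ≤ l := by simpa [Nat.lt_succ_iff] using hm
  have e5 : l + 1 - 1 - m = l - m := by omega
  have e6 : l - (l - m) = m := by omega
  have e7 : b + l - 1 = (b + m) + ((l - m : ℕ) : ℝ) - 1 := by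
    rw [Nat.cast_sub hml]; ring
  have e8 : b + m + ((l - m : ℕ) : ℝ) = l + b := by rw [Nat.cast_sub hml]; ring
  have hGm : 0 < Real.Gamma (m + b) := Real.Gamma_pos_of_pos (by positivity)
  simp only [e5, e6]
  rw [e7, ring_choose_eq_Gamma (by positivity), e8, Ring.choose_natCast, add_comm b]
  split_ifs with hmk
  · rw [Nat.cast_choose ℝ hmk]
    have : (k.factorial : ℝ) ≠ 0 := by exact_mod_cast k.factorial_ne_zero
    field_simp
  · rw [Nat.choose_eq_zero_of_lt (by omega)]
    simp

theorem hasSum_mul_prod {ι κ : Type*} {f : ι → ℂ} {g : κ → ℂ} {s t : ℂ} (hf : HasSum f s)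
    (hg : HasSum g t) : HasSum (fun p : ι × κ => f p.1 * g p.2) (s * t) :=
  hf.mul hg (summable_mul_of_summable_norm hf.summable.norm hg.summable.norm)

theorem hasSum_exp_div_factorial (z : ℂ) :
    HasSum (fun n : ℕ => z ^ n / (n.factorial : ℂ)) (Complex.exp z) := by
  rw [Complex.exp_eq_exp_ℂ]
  exact NormedSpace.expSeries_div_hasSum_exp z

theorem hasSum_vandermonde {b : ℝ} (hb : 0 < b) (A B : ℂ) :
    HasSum (fun p : ℕ × ℕ => A ^ p.1 * B ^ p.2 * ((Real.Gamma (p.1 + p.2 + b) /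
        ((p.1.factorial * Real.Gamma (p.1 + b)) * (p.2.factorial * Real.Gamma (p.2 + b))) : ℝ) : ℂ))
      (Complex.exp (A + B) * besselE b (A * B)) := by
  obtain ⟨c, hc⟩ : ∃ c : ℕ → ℂ, c = fun k : ℕ =>
      (A * B) ^ k / ((k.factorial : ℂ) * (Real.Gamma (k + b) : ℂ)) := ⟨_, rfl⟩
  obtain ⟨e, he⟩ : ∃ e : ℂ → ℕ → ℂ, e = fun z n => z ^ n / (n.factorial : ℂ) := ⟨_, rfl⟩
  have hcs : HasSum c (besselE b (A * B)) := by
    rw [hc]; exact (summable_besselE hb (A * B)).hasSum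
  have hes : ∀ z, HasSum (e z) (Complex.exp z) := by
    intro z; rw [he]; exact hasSum_exp_div_factorial z
  have h3 := hasSum_mul_prod hcs (hasSum_mul_prod (hes A) (hes B))
  obtain ⟨h, hh⟩ : ∃ h : (ℕ × ℕ) × ℕ → ℂ, h = fun q => if q.2 ≤ q.1.1 ∧ q.2 ≤ q.1.2 then
    A ^ q.1.1 * B ^ q.1.2 * (((q.2.factorial * Real.Gamma (q.2 + b)) *
      (q.1.1 - q.2).factorial * (q.1.2 - q.2).factorial)⁻¹ : ℝ) else 0 := ⟨_, rfl⟩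
  obtain ⟨π, hπ⟩ : ∃ π : ℕ × (ℕ × ℕ) → (ℕ × ℕ) × ℕ,
      π = fun p => ((p.1 + p.2.1, p.1 + p.2.2), p.1) := ⟨_, rfl⟩
  have hinj : Function.Injective π := by
    rintro ⟨m, i, j⟩ ⟨m', i', j'⟩ hq
    simp only [hπ, Prod.mk.injEq] at hq ⊢
    omega
  have hzero : ∀ q, q ∉ Set.range π → h q = 0 := by
    rintro ⟨⟨k, l⟩, m⟩ hq
    simp only [hh]
    rw [if_neg]
    rintro ⟨h1, h2⟩
    refine hq ⟨(m, (k - m, l - m)), ?_⟩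
    simp only [hπ, Prod.mk.injEq]
    exact ⟨⟨Nat.add_sub_cancel' h1, Nat.add_sub_cancel' h2⟩, trivial⟩
  have h4 : HasSum h (besselE b (A * B) * (Complex.exp A * Complex.exp B)) := by
    rw [← hinj.hasSum_iff hzero]
    refine h3.congr_fun ?_
    rintro ⟨m, i, j⟩
    simp only [hc, he, hπ, hh, Function.comp_apply, le_add_iff_nonneg_right, zero_le, and_self, if_true,
      Nat.add_sub_cancel_left]
    push_cast
    rw [div_mul_div_comm, div_mul_div_comm, div_eq_mul_inv]
    ring
  have h5 := h4.prod_fiberwise (g := fun p : ℕ × ℕ => A ^ p.1 * B ^ p.2 *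
    ((Real.Gamma (p.1 + p.2 + b) /
      ((p.1.factorial * Real.Gamma (p.1 + b)) * (p.2.factorial * Real.Gamma (p.2 + b))) : ℝ) : ℂ))
    (by
      rintro ⟨k, l⟩
      dsimp only
      rw [← Gamma_vandermonde hb k l]
      have : A ^ k * B ^ l * ((∑ m ∈ Finset.range (l + 1), (if m ≤ k then
          ((m.factorial * Real.Gamma (m + b)) * (k - m).factorial * (l - m).factorial)⁻¹
          else 0 : ℝ) : ℝ) : ℂ) = ∑ m ∈ Finset.range (l + 1), h ((k, l), m) := by
        rw [Complex.ofReal_sum, Finset.mul_sum]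
        refine Finset.sum_congr rfl fun m hm => ?_
        have hml : m ≤ l := by simpa [Nat.lt_succ_iff] using hm
        simp only [hh, hml, and_true]
        split_ifs <;> simp
      rw [this]
      refine hasSum_sum_of_ne_finset_zero fun m hm => ?_
      have hml : ¬ m ≤ l := by simpa [Nat.lt_succ_iff] using hm
      simp [hh, hml])
  rw [Complex.exp_add, mul_comm]
  exact h5

/-- The measure `x ^ s dx` on the half-line `(0, ∞)`. -/
noncomputable def powMeasure (s : ℝ) : Measure ℝ :=
  (volume.restrict (Ioi 0)).withDensity fun x => ENNReal.ofReal (x ^ s)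

instance (s : ℝ) : SFinite (powMeasure s) := by unfold powMeasure; infer_instance

theorem ae_powMeasure {s : ℝ} {p : ℝ → Prop} (h : ∀ᵐ x ∂(volume.restrict (Ioi (0 : ℝ))), p x) :
    ∀ᵐ x ∂powMeasure s, p x :=
  (withDensity_absolutelyContinuous _ _).ae_le h

theorem ae_powMeasure_pos (s : ℝ) : ∀ᵐ x ∂powMeasure s, 0 < x :=
  ae_powMeasure (ae_restrict_mem measurableSet_Ioi)

theorem integral_powMeasure {E : Type*} [NormedAddCommGroup E] [NormedSpace ℝ E] (s : ℝ)
    (f : ℝ → E) : ∫ x, f x ∂powMeasure s = ∫ x in Ioi (0 : ℝ), x ^ s • f x := by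
  rw [powMeasure, integral_withDensity_eq_integral_toReal_smul (by fun_prop) (by simp)]
  refine setIntegral_congr_fun measurableSet_Ioi fun x hx => ?_
  rw [ENNReal.toReal_ofReal (Real.rpow_nonneg (le_of_lt hx) _)]

theorem integrable_powMeasure {E : Type*} [NormedAddCommGroup E] [NormedSpace ℝ E] (s : ℝ)
    (f : ℝ → E) :
    Integrable f (powMeasure s) ↔ IntegrableOn (fun x => x ^ s • f x) (Ioi (0 : ℝ)) := by
  rw [powMeasure, integrable_withDensity_iff_integrable_smul' (by fun_prop) (by simp)]
  refine integrable_congr ?_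
  filter_upwards [ae_restrict_mem measurableSet_Ioi] with x hx
  rw [ENNReal.toReal_ofReal (Real.rpow_nonneg (le_of_lt hx) _)]

theorem integrable_pow_mul_exp {s : ℝ} (hs : -1 < s) {ρ : ℝ} (hρ : 0 < ρ) (n : ℕ) :
    Integrable (fun x : ℝ => x ^ n * Real.exp (-ρ * x)) (powMeasure s) := by
  rw [integrable_powMeasure]
  have h := integrableOn_rpow_mul_exp_neg_mul_rpow (p := 1) (s := s + n) (b := ρ)
    (by have : (0 : ℝ) ≤ n := by positivity
        linarith) one_pos hρ
  refine h.congr_fun (fun x hx => ?_) measurableSet_Ioi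
  simp only [Real.rpow_one, smul_eq_mul]
  rw [Real.rpow_add hx, Real.rpow_natCast, mul_assoc]

theorem integral_pow_mul_exp_real {b : ℝ} (hb : 0 < b) {ρ : ℝ} (hρ : 0 < ρ) (n : ℕ) :
    ∫ x : ℝ, x ^ n * Real.exp (-ρ * x) ∂powMeasure (b - 1) =
      Real.Gamma (n + b) * ((1 / ρ) ^ b * (1 / ρ) ^ n) := by
  rw [integral_powMeasure]
  have h := Real.integral_rpow_mul_exp_neg_mul_Ioi (a := n + b) (by positivity) hρ
  rw [Real.rpow_add (by positivity), Real.rpow_natCast] at h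
  rw [mul_comm ((1 / ρ) ^ b), mul_comm (Real.Gamma _), ← h]
  refine setIntegral_congr_fun measurableSet_Ioi fun x hx => ?_
  have e : (n : ℝ) + b - 1 = b - 1 + n := by ring
  simp only [smul_eq_mul]
  rw [e, Real.rpow_add hx, Real.rpow_natCast, neg_mul, mul_assoc]

theorem integral_exp_complex {b : ℝ} (hb : 0 < b) {ρ : ℂ} (hρ : 0 < ρ.re) :
    ∫ x : ℝ, Complex.exp (-ρ * x) ∂powMeasure (b - 1) = (1 / ρ) ^ (b : ℂ) * Real.Gamma b := by
  set U : Set ℂ := {z | z.re < 0} with hU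
  have hset : ∀ z ∈ U, z.re ∈ interior
      (ProbabilityTheory.integrableExpSet (id : ℝ → ℝ) (powMeasure (b - 1))) := by
    intro z hz
    refine mem_interior.2 ⟨Iio 0, fun r hr => ?_, isOpen_Iio, hz⟩
    have := integrable_pow_mul_exp (s := b - 1) (by linarith) (ρ := -r) (by simpa using hr) 0
    simpa [ProbabilityTheory.integrableExpSet] using this
  have han : AnalyticOnNhd ℂ
      (ProbabilityTheory.complexMGF (id : ℝ → ℝ) (powMeasure (b - 1))) U := fun z hz =>
    ProbabilityTheory.analyticAt_complexMGF (hset z hz)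
  have han' : AnalyticOnNhd ℂ (fun z : ℂ => (1 / (-z)) ^ (b : ℂ) * (Real.Gamma b : ℂ)) U := by
    refine DifferentiableOn.analyticOnNhd ?_ (isOpen_lt Complex.continuous_re continuous_const)
    intro z hz
    have hz0 : -z ≠ 0 := by
      intro h0; rw [neg_eq_zero] at h0; simp [hU, h0] at hz
    refine DifferentiableAt.differentiableWithinAt ?_
    refine DifferentiableAt.mul_const (DifferentiableAt.cpow_const
      ((differentiableAt_const _).div differentiableAt_id.neg hz0) ?_) _
    left
    change 0 < (1 / -z).re
    rw [one_div, Complex.inv_re]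
    have : 0 < Complex.normSq (-z) := Complex.normSq_pos.2 hz0
    have hz' : z.re < 0 := hz
    exact div_pos (by simpa using hz') this
  have hconn : IsPreconnected U :=
    ((convex_halfSpace_lt (f := Complex.re) Complex.reLm.isLinear 0)).isPreconnected
  have heq := han.eqOn_of_preconnected_of_frequently_eq han' hconn
    (z₀ := -1) (by simp [hU]) (by
      have hmap : Tendsto (fun n : ℕ => ((-1 - 1 / ((n : ℝ) + 1) : ℝ) : ℂ)) atTop
          (nhdsWithin (-1 : ℂ) {(-1 : ℂ)}ᶜ) := by
        refine tendsto_nhdsWithin_iff.2 ⟨?_, ?_⟩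
        · have h := (tendsto_const_nhds (x := (-1 : ℝ))).sub tendsto_one_div_add_atTop_nhds_zero_nat
          have h2 := (Complex.continuous_ofReal.tendsto _).comp h
          simpa [Function.comp_def] using h2
        · refine Eventually.of_forall fun n => ?_
          have : (-1 - 1 / ((n : ℝ) + 1) : ℝ) ≠ -1 := by
            have : 0 < 1 / ((n : ℝ) + 1) := by positivity
            linarith
          simp only [mem_compl_iff, mem_singleton_iff]
          exact_mod_cast this
      refine hmap.frequently (Eventually.of_forall fun n => ?_).frequently
      set r : ℝ := 1 + 1 / ((n : ℝ) + 1) with hr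
      have hr0 : 0 < r := by positivity
      have e : (-1 - 1 / ((n : ℝ) + 1) : ℝ) = -r := by rw [hr]; ring
      rw [e, ProbabilityTheory.complexMGF_ofReal, ProbabilityTheory.mgf]
      have h := integral_pow_mul_exp_real hb hr0 0
      simp only [pow_zero, one_mul, mul_one, Nat.cast_zero, zero_add] at h
      simp only [id]
      rw [h, Complex.ofReal_mul, mul_comm, Complex.ofReal_cpow (by positivity)]
      push_cast
      simp)
  have := heq (x := -ρ) (by simpa [hU] using hρ)
  simpa [ProbabilityTheory.complexMGF] using this

theorem integral_pow_mul_exp_complex {b : ℝ} (hb : 0 < b) {ρ : ℂ} (hρ : 0 < ρ.re) (n : ℕ) :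
    ∫ x : ℝ, (x : ℂ) ^ n * Complex.exp (-ρ * x) ∂powMeasure (b - 1) =
      Real.Gamma (n + b) * ((1 / ρ) ^ (b : ℂ) * (1 / ρ) ^ n) := by
  have hρ0 : ρ ≠ 0 := by rintro rfl; simp at hρ
  have h := integral_exp_complex (b := n + b) (by positivity) hρ
  push_cast at h
  rw [Complex.cpow_add _ _ (one_div_ne_zero hρ0), Complex.cpow_natCast] at h
  rw [mul_comm ((1 / ρ) ^ (b : ℂ)), mul_comm (Real.Gamma _ : ℂ), ← h, integral_powMeasure,
    integral_powMeasure]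
  refine setIntegral_congr_fun measurableSet_Ioi fun x hx => ?_
  have e : (n : ℝ) + b - 1 = b - 1 + n := by ring
  simp only [Complex.real_smul]
  rw [e, Real.rpow_add hx, Real.rpow_natCast]
  push_cast
  ring

/-- Weber's second exponential integral. -/
theorem integral_exp_mul_besselE_mul_besselE {b : ℝ} (hb : 0 < b) {ρ : ℂ} (hρ : 0 < ρ.re)
    (A B : ℂ) :
    ∫ v : ℝ, Complex.exp (-ρ * v) * besselE b (A * v) * besselE b (B * v) ∂powMeasure (b - 1) =
      (1 / ρ) ^ (b : ℂ) * (Complex.exp ((A + B) / ρ) * besselE b (A * B / ρ ^ 2)) := by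
  have hρ0 : ρ ≠ 0 := by rintro rfl; simp at hρ
  obtain ⟨c, hc⟩ : ∃ c : ℕ → ℝ, ∀ k, c k = (k.factorial * Real.Gamma (k + b))⁻¹ :=
    ⟨_, fun _ => rfl⟩
  have hc0 : ∀ k, 0 ≤ c k := fun k => by
    rw [hc]
    have := Real.Gamma_pos_of_pos (show 0 < k + b by positivity)
    positivity
  have hV : ∀ A B : ℂ, HasSum (fun p : ℕ × ℕ => A ^ p.1 * B ^ p.2 *
      ((Real.Gamma (p.1 + p.2 + b) * (c p.1 * c p.2) : ℝ) : ℂ))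
      (Complex.exp (A + B) * besselE b (A * B)) := by
    intro A B
    refine (hasSum_vandermonde hb A B).congr_fun fun p => ?_
    rw [hc, hc, ← mul_inv, ← div_eq_mul_inv]
  have hterm : ∀ (z : ℂ) (v : ℝ), HasSum (fun k : ℕ => z ^ k * c k * (v : ℂ) ^ k)
      (besselE b (z * v)) := by
    intro z v
    refine (summable_besselE hb (z * v)).hasSum.congr_fun fun k => ?_
    rw [hc]
    push_cast
    rw [mul_pow, div_eq_mul_inv]
    ring
  obtain ⟨F, hF⟩ : ∃ F : ℕ × ℕ → ℝ → ℂ, ∀ p v, F p v = (A ^ p.1 * B ^ p.2 * (c p.1 * c p.2)) *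
      ((v : ℂ) ^ (p.1 + p.2) * Complex.exp (-ρ * v)) := ⟨_, fun _ _ => rfl⟩
  have hFsum : ∀ v : ℝ, HasSum (fun p => F p v)
      (Complex.exp (-ρ * v) * besselE b (A * v) * besselE b (B * v)) := by
    intro v
    rw [mul_assoc]
    refine ((hasSum_mul_prod (hterm A v) (hterm B v)).mul_left _).congr_fun fun p => ?_
    rw [hF, pow_add]
    ring
  have hFnorm : ∀ p, (fun v => ‖F p v‖) =ᵐ[powMeasure (b - 1)] fun v =>
      (‖A‖ ^ p.1 * ‖B‖ ^ p.2 * (c p.1 * c p.2)) *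
        (v ^ (p.1 + p.2) * Real.exp (-ρ.re * v)) := by
    intro p
    filter_upwards [ae_powMeasure_pos (b - 1)] with v hv
    rw [hF, norm_mul, norm_mul, norm_mul, norm_mul, norm_mul, norm_pow, norm_pow, norm_pow,
      Complex.norm_real, Complex.norm_real, Complex.norm_real, Complex.norm_exp]
    simp [abs_of_nonneg (hc0 _), abs_of_pos hv]
  have hFint : ∀ p, Integrable (F p) (powMeasure (b - 1)) := by
    intro p
    have hm : AEStronglyMeasurable (F p) (powMeasure (b - 1)) := by
      have : F p = fun v : ℝ => (A ^ p.1 * B ^ p.2 * (c p.1 * c p.2)) *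
        ((v : ℂ) ^ (p.1 + p.2) * Complex.exp (-ρ * v)) := funext (hF p)
      rw [this]
      exact Continuous.aestronglyMeasurable (by fun_prop)
    rw [← integrable_norm_iff hm]
    refine Integrable.congr ?_ (hFnorm p).symm
    exact (integrable_pow_mul_exp (by linarith) hρ _).const_mul _
  have hFI : ∀ p, ∫ v, F p v ∂powMeasure (b - 1) = (1 / ρ) ^ (b : ℂ) *
      ((A / ρ) ^ p.1 * (B / ρ) ^ p.2 *
        ((Real.Gamma (p.1 + p.2 + b) * (c p.1 * c p.2) : ℝ) : ℂ)) := by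
    intro p
    simp only [hF]
    rw [integral_const_mul, integral_pow_mul_exp_complex hb hρ]
    push_cast
    simp only [div_eq_mul_inv, mul_pow, pow_add, one_mul]
    ring
  have hsumm : Summable fun p => ∫ v, ‖F p v‖ ∂powMeasure (b - 1) := by
    have h1 := ((hV (‖A‖ / ρ.re : ℝ) (‖B‖ / ρ.re : ℝ)).summable.norm).mul_left ((1 / ρ.re) ^ b)
    refine h1.congr fun p => ?_
    rw [integral_congr_ae (hFnorm p), integral_const_mul, integral_pow_mul_exp_real hb hρ]
    have hG := Real.Gamma_pos_of_pos (show 0 < p.1 + p.2 + b by positivity)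
    rw [norm_mul, norm_mul, norm_pow, norm_pow, Complex.norm_real, Complex.norm_real,
      Complex.norm_real, Real.norm_of_nonneg (by positivity), Real.norm_of_nonneg (by positivity),
      Real.norm_of_nonneg (mul_nonneg hG.le (mul_nonneg (hc0 _) (hc0 _)))]
    push_cast
    simp only [div_eq_mul_inv, mul_pow, pow_add, one_mul]
    ring
  have hS := hasSum_integral_of_summable_integral_norm hFint hsumm
  have e1 : (fun v => ∑' p, F p v) = fun v : ℝ =>
      Complex.exp (-ρ * v) * besselE b (A * v) * besselE b (B * v) :=
    funext fun v => (hFsum v).tsum_eq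
  rw [e1] at hS
  refine hS.unique ?_
  simp only [hFI]
  have h2 := (hV (A / ρ) (B / ρ)).mul_left ((1 / ρ) ^ (b : ℂ))
  rw [← add_div, div_mul_div_comm, ← sq] at h2
  exact h2

theorem integral_exp_mul_besselE {b : ℝ} (hb : 0 < b) {ρ : ℂ} (hρ : 0 < ρ.re) (A : ℂ) :
    ∫ v : ℝ, Complex.exp (-ρ * v) * besselE b (A * v) ∂powMeasure (b - 1) =
      (1 / ρ) ^ (b : ℂ) * Complex.exp (A / ρ) := by
  have h := integral_exp_mul_besselE_mul_besselE hb hρ A 0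
  have hG := (Real.Gamma_pos_of_pos hb).ne'
  have hG' : ((Real.Gamma b)⁻¹ : ℂ) ≠ 0 := by exact_mod_cast inv_ne_zero hG
  simp only [zero_mul, mul_zero, zero_div, add_zero, besselE_zero, Complex.ofReal_inv] at h
  rw [integral_mul_const, ← mul_assoc] at h
  exact mul_right_cancel₀ hG' h

theorem integral_comp_sq_powMeasure {E : Type*} [NormedAddCommGroup E] [NormedSpace ℝ E]
    (a : ℝ) (f : ℝ → E) :
    ∫ x, f (x ^ 2) ∂powMeasure a = (1 / 2 : ℝ) • ∫ v, f v ∂powMeasure ((a + 1) / 2 - 1) := by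
  rw [integral_powMeasure, integral_powMeasure,
    ← integral_comp_rpow_Ioi (fun v : ℝ => v ^ ((a + 1) / 2 - 1) • f v) (p := 2) two_ne_zero,
    ← integral_smul]
  refine setIntegral_congr_fun measurableSet_Ioi fun x hx => ?_
  have hx' : 0 < x := hx
  simp only [Real.rpow_two, smul_smul]
  congr 1
  rw [← Real.rpow_natCast x 2, ← Real.rpow_mul hx'.le, abs_of_pos two_pos,
    show (1 / 2 : ℝ) * (2 * x ^ ((2 : ℝ) - 1) * x ^ (((2 : ℕ) : ℝ) * ((a + 1) / 2 - 1))) =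
      x ^ ((2 : ℝ) - 1) * x ^ (((2 : ℕ) : ℝ) * ((a + 1) / 2 - 1)) by ring, ← Real.rpow_add hx']
  congr 1
  push_cast
  ring

theorem norm_besselE_neg_sq_le {b : ℝ} (hb : 1 / 2 ≤ b) (x : ℝ) :
    ‖besselE b ((-x ^ 2 : ℝ) : ℂ)‖ ≤ (Real.Gamma b)⁻¹ := by
  have h := norm_besselE_le hb (2 * x * Complex.I)
  have e : (2 * x * Complex.I) ^ 2 / 4 = ((-x ^ 2 : ℝ) : ℂ) := by
    push_cast
    rw [mul_pow, Complex.I_sq]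
    ring
  rw [e] at h
  simpa using h

theorem norm_exp_mul_besselE_le {b : ℝ} (hb : 1 / 2 ≤ b) {ρ : ℂ} (hρ : 0 < ρ.re) (α β : ℝ) :
    ‖Complex.exp ((((-α ^ 2 : ℝ) : ℂ) + ((-β ^ 2 : ℝ) : ℂ)) / ρ) *
      besselE b (((-α ^ 2 : ℝ) : ℂ) * ((-β ^ 2 : ℝ) : ℂ) / ρ ^ 2)‖ ≤ (Real.Gamma b)⁻¹ := by
  have hρ0 : ρ ≠ 0 := by rintro rfl; simp at hρ
  have hG := Real.Gamma_pos_of_pos (show 0 < b by linarith)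
  have h := norm_besselE_le hb (((2 * α * β : ℝ) : ℂ) * ρ⁻¹)
  have e : (((2 * α * β : ℝ) : ℂ) * ρ⁻¹) ^ 2 / 4 =
      ((-α ^ 2 : ℝ) : ℂ) * ((-β ^ 2 : ℝ) : ℂ) / ρ ^ 2 := by
    push_cast
    field_simp
    ring
  rw [e, Complex.re_ofReal_mul, abs_mul] at h
  have hκ : 0 ≤ (ρ⁻¹).re := by
    rw [Complex.inv_re]
    exact div_nonneg hρ.le (Complex.normSq_nonneg _)
  rw [norm_mul, Complex.norm_exp, ← Complex.ofReal_add, div_eq_mul_inv, Complex.re_ofReal_mul]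
  calc Real.exp ((-α ^ 2 + -β ^ 2) * (ρ⁻¹).re) * _
      ≤ Real.exp ((-α ^ 2 + -β ^ 2) * (ρ⁻¹).re) *
        ((Real.Gamma b)⁻¹ * Real.exp (|2 * α * β| * |(ρ⁻¹).re|)) := by gcongr
    _ = (Real.Gamma b)⁻¹ * Real.exp ((-α ^ 2 + -β ^ 2 + |2 * α * β|) * (ρ⁻¹).re) := by
        rw [abs_of_nonneg hκ, add_mul (-α ^ 2 + -β ^ 2), Real.exp_add]
        ring
    _ ≤ (Real.Gamma b)⁻¹ * 1 := by
        gcongr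
        rw [Real.exp_le_one_iff]
        refine mul_nonpos_of_nonpos_of_nonneg ?_ hκ
        rcases abs_cases (2 * α * β) with ⟨h, -⟩ | ⟨h, -⟩ <;> rw [h] <;>
          nlinarith [sq_nonneg (α - β), sq_nonneg (α + β)]
    _ = _ := mul_one _

/-- The factor of the kernel `S_a(x, y, -t)` that depends on `t` only. -/
noncomputable def propCoeff (a t : ℝ) : ℂ :=
  (((2 : ℝ) ^ (1 - (a + 1) / 2) * (2 * |t|) ^ (-((a + 1) / 2)) : ℝ) : ℂ) *
    Complex.exp ((((if t < 0 then -1 else 1) * ((a + 1) * Real.pi / 4) : ℝ) : ℂ) * Complex.I)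

/-- The kernel `S_a(x, y, -t)`, written with the entire function `besselE`. -/
noncomputable def propKernel (a t x y : ℝ) : ℂ :=
  propCoeff a t * Complex.exp ((-((x ^ 2 + y ^ 2) / (4 * t)) : ℝ) * Complex.I) *
    besselE ((a + 1) / 2) ((-(x * y / (4 * t)) ^ 2 : ℝ) : ℂ)

theorem norm_propCoeff (a t : ℝ) :
    ‖propCoeff a t‖ = (2 : ℝ) ^ (1 - (a + 1) / 2) * (2 * |t|) ^ (-((a + 1) / 2)) := by
  rw [propCoeff, norm_mul, Complex.norm_exp_ofReal_mul_I, Complex.norm_real, mul_one,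
    Real.norm_of_nonneg (by positivity)]

theorem norm_propKernel_le {a : ℝ} (ha : 0 ≤ a) (t x y : ℝ) :
    ‖propKernel a t x y‖ ≤ ‖propCoeff a t‖ * (Real.Gamma ((a + 1) / 2))⁻¹ := by
  rw [propKernel, norm_mul, norm_mul, Complex.norm_exp_ofReal_mul_I, mul_one]
  gcongr
  exact norm_besselE_neg_sq_le (by linarith) _

theorem measurable_propCoeff (a : ℝ) : Measurable (propCoeff a) := by
  unfold propCoeff
  have h : Measurable fun t : ℝ => (if t < 0 then (-1 : ℝ) else 1) :=
    Measurable.ite measurableSet_Iio measurable_const measurable_const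
  fun_prop

theorem measurable_propKernel {a : ℝ} (ha : 0 ≤ a) :
    Measurable fun p : ℝ × ℝ × ℝ => propKernel a p.1 p.2.1 p.2.2 := by
  unfold propKernel
  have h1 := measurable_propCoeff a
  have h2 := (continuous_besselE (b := (a + 1) / 2) (by linarith)).measurable
  fun_prop

theorem Skernel_neg_eq_propKernel {a t x y : ℝ} (ht : t ≠ 0) (hx : 0 < x)
    (hy : 0 < y) : Skernel a x y (-t) = propKernel a t x y := by
  have ht' : 0 < |t| := abs_pos.2 ht
  have hz : 0 < x * y / (2 * |t|) := by positivity
  have hJ : (((x * y / (2 * |t|)) ^ ((1 - a) / 2) : ℝ) : ℂ) *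
      besselJ (((a - 1) / 2 : ℝ) : ℂ) (x * y / (2 * |t|)) =
      (((2 : ℝ) ^ (1 - (a + 1) / 2) : ℝ) : ℂ) *
        besselE ((a + 1) / 2) ((-(x * y / (4 * t)) ^ 2 : ℝ) : ℂ) := by
    rw [besselJ, besselE, ← tsum_mul_left, ← tsum_mul_left]
    refine tsum_congr fun k => ?_
    have hsq : (x * y / (4 * t)) ^ 2 = (x * y / (2 * |t|) / 2) ^ 2 := by
      rw [div_pow, div_pow, div_pow, mul_pow 4, mul_pow 2, sq_abs, div_div]
      ring
    rw [hsq]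
    generalize x * y / (2 * |t|) = z at hz
    have hz2 : 0 < z / 2 := by positivity
    have e1 : ((z : ℂ) / 2) ^ (2 * (k : ℂ) + (((a - 1) / 2 : ℝ) : ℂ)) =
        (((z / 2) ^ (2 * k) * (z / 2) ^ ((a - 1) / 2) : ℝ) : ℂ) := by
      have : (2 * (k : ℂ) + (((a - 1) / 2 : ℝ) : ℂ)) =
          ((((2 * k : ℕ) : ℝ) + (a - 1) / 2 : ℝ) : ℂ) := by push_cast; ring
      rw [this, show ((z : ℂ) / 2) = ((z / 2 : ℝ) : ℂ) by push_cast; ring,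
        ← Complex.ofReal_cpow hz2.le, Real.rpow_add hz2, Real.rpow_natCast]
    have e2 : ((((a - 1) / 2 : ℝ) : ℂ) + k + 1) = ((k + (a + 1) / 2 : ℝ) : ℂ) := by
      push_cast; ring
    rw [e1, e2, Complex.Gamma_nat_eq_factorial, Complex.Gamma_ofReal]
    have e3 : z ^ ((1 - a) / 2) * (z / 2) ^ ((a - 1) / 2) = 2 ^ (1 - (a + 1) / 2) := by
      rw [Real.div_rpow hz.le two_pos.le, mul_div_assoc', ← Real.rpow_add hz,
        show (1 - a) / 2 + (a - 1) / 2 = 0 by ring, Real.rpow_zero, one_div,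
        ← Real.rpow_neg two_pos.le]
      congr 1; ring
    rw [← e3]
    push_cast
    rw [neg_pow (((z : ℂ) / 2) ^ 2), ← pow_mul]
    ring
  have hexp : ∀ c s : ℝ, Complex.exp (c * Complex.I) * (((2 * |t|) ^ (-(a + 1) / 2) : ℝ) : ℂ) *
      (((x * y / (2 * |t|)) ^ ((1 - a) / 2) : ℝ) : ℂ) *
      besselJ (((a - 1) / 2 : ℝ) : ℂ) (x * y / (2 * |t|)) * Complex.exp (s * Complex.I) =
      (((2 : ℝ) ^ (1 - (a + 1) / 2) * (2 * |t|) ^ (-((a + 1) / 2)) : ℝ) : ℂ) *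
        Complex.exp (c * Complex.I) * Complex.exp (s * Complex.I) *
        besselE ((a + 1) / 2) ((-(x * y / (4 * t)) ^ 2 : ℝ) : ℂ) := by
    intro c s
    rw [mul_assoc (Complex.exp (c * Complex.I) * _) _ (besselJ _ _), hJ, ← neg_div]
    push_cast
    ring
  rw [Skernel, propKernel, propCoeff, abs_neg]
  rcases lt_or_gt_of_ne ht with h | h
  · rw [if_pos (by linarith), if_pos h, ← hexp, abs_of_neg h]
    congr 2
    · congr 3
      push_cast; ring
    · push_cast
      rw [mul_comm]; congr 2
      ring
  · rw [if_neg (by linarith), if_neg (by linarith), ← hexp, abs_of_pos h]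
    congr 2
    · congr 3
      push_cast; ring
    · push_cast
      ring

open scoped ComplexConjugate

/-- The kernel of the regularised operator `U_s^* e^{-δ x²} U_t`. -/
noncomputable def pairKernel (a δ t s y y' : ℝ) : ℂ :=
  ∫ x, (Real.exp (-δ * x ^ 2) : ℂ) * (propKernel a t x y * conj (propKernel a s x y')) ∂powMeasure a

theorem conj_besselE_ofReal (b x : ℝ) : conj (besselE b x) = besselE b x := by
  rw [besselE_ofReal, Complex.conj_ofReal]

theorem pairKernel_eq {a δ : ℝ} (ha : 0 ≤ a) (hδ : 0 < δ) (t s y y' : ℝ) :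
    pairKernel a δ t s y y' = propCoeff a t * conj (propCoeff a s) *
      Complex.exp (((y' ^ 2 / (4 * s) - y ^ 2 / (4 * t) : ℝ) : ℂ) * Complex.I) *
      (1 / 2 * ((1 / (δ + ((1 / (4 * t) - 1 / (4 * s) : ℝ) : ℂ) * Complex.I)) ^
          (((a + 1) / 2 : ℝ) : ℂ) *
        (Complex.exp ((((-(y / (4 * t)) ^ 2 : ℝ) : ℂ) + ((-(y' / (4 * s)) ^ 2 : ℝ) : ℂ)) /
            (δ + ((1 / (4 * t) - 1 / (4 * s) : ℝ) : ℂ) * Complex.I)) *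
          besselE ((a + 1) / 2) (((-(y / (4 * t)) ^ 2 : ℝ) : ℂ) * ((-(y' / (4 * s)) ^ 2 : ℝ) : ℂ) /
            (δ + ((1 / (4 * t) - 1 / (4 * s) : ℝ) : ℂ) * Complex.I) ^ 2)))) := by
  have hρ : 0 < ((δ : ℂ) + ((1 / (4 * t) - 1 / (4 * s) : ℝ) : ℂ) * Complex.I).re := by simpa using hδ
  rw [← integral_exp_mul_besselE_mul_besselE (by linarith) hρ]
  have h := integral_comp_sq_powMeasure a (fun v : ℝ =>
    Complex.exp (-(δ + ((1 / (4 * t) - 1 / (4 * s) : ℝ) : ℂ) * Complex.I) * v) *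
      besselE ((a + 1) / 2) (((-(y / (4 * t)) ^ 2 : ℝ) : ℂ) * v) *
      besselE ((a + 1) / 2) (((-(y' / (4 * s)) ^ 2 : ℝ) : ℂ) * v))
  rw [Complex.real_smul] at h
  push_cast at h ⊢
  rw [← h, pairKernel, ← integral_const_mul]
  congr 1
  ext x
  have e1 : ((-(x * y / (4 * t)) ^ 2 : ℝ) : ℂ) = -((y : ℂ) / (4 * t)) ^ 2 * x ^ 2 := by
    push_cast; ring
  have e2 : ((-(x * y' / (4 * s)) ^ 2 : ℝ) : ℂ) = -((y' : ℂ) / (4 * s)) ^ 2 * x ^ 2 := by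
    push_cast; ring
  rw [propKernel, propKernel, map_mul, map_mul, conj_besselE_ofReal, ← Complex.exp_conj, e1, e2,
    Complex.ofReal_exp]
  have e3 : Complex.exp ((-δ * x ^ 2 : ℝ) : ℂ) *
      (Complex.exp ((-((x ^ 2 + y ^ 2) / (4 * t)) : ℝ) * Complex.I) *
        Complex.exp (conj (((-((x ^ 2 + y' ^ 2) / (4 * s)) : ℝ) : ℂ) * Complex.I))) =
      Complex.exp (((y' : ℂ) ^ 2 / (4 * s) - (y : ℂ) ^ 2 / (4 * t)) * Complex.I) *
        Complex.exp (-(δ + (1 / (4 * t) - 1 / (4 * s)) * Complex.I) * (x : ℂ) ^ 2) := by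
    rw [← Complex.exp_add, ← Complex.exp_add, ← Complex.exp_add, map_mul, Complex.conj_ofReal,
      Complex.conj_I]
    congr 1
    push_cast
    ring
  linear_combination (propCoeff a t * conj (propCoeff a s) *
    besselE ((a + 1) / 2) (-((y : ℂ) / (4 * t)) ^ 2 * x ^ 2) *
    besselE ((a + 1) / 2) (-((y' : ℂ) / (4 * s)) ^ 2 * x ^ 2)) * e3

theorem norm_pairKernel_le {a δ : ℝ} (ha : 0 ≤ a) (hδ : 0 < δ) {t s : ℝ} (ht : t ≠ 0) (hs : s ≠ 0)
    (hts : t ≠ s) (y y' : ℝ) :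
    ‖pairKernel a δ t s y y'‖ ≤
      2 ^ (-a) * (Real.Gamma ((a + 1) / 2))⁻¹ * |t - s| ^ (-((a + 1) / 2)) := by
  rw [pairKernel_eq ha hδ]
  have hb : 1 / 2 ≤ (a + 1) / 2 := by linarith
  have hb0 : 0 < (a + 1) / 2 := by linarith
  set ρ : ℂ := δ + ((1 / (4 * t) - 1 / (4 * s) : ℝ) : ℂ) * Complex.I with hρdef
  have hρ : 0 < ρ.re := by simpa [hρdef] using hδ
  have hG := Real.Gamma_pos_of_pos hb0
  have h1 := norm_exp_mul_besselE_le hb hρ (y / (4 * t)) (y' / (4 * s))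
  have ht' : 0 < |t| := abs_pos.2 ht
  have hs' : 0 < |s| := abs_pos.2 hs
  have hts' : 0 < |t - s| := abs_pos.2 (sub_ne_zero.2 hts)
  have hρn : |t - s| / (4 * (|t| * |s|)) ≤ ‖ρ‖ := by
    have e : |ρ.im| = |t - s| / (4 * (|t| * |s|)) := by
      have : ρ.im = -((t - s) / (4 * (t * s))) := by
        simp [hρdef]
        field_simp
        ring
      rw [this, abs_neg, abs_div, abs_mul, abs_mul, abs_of_pos (four_pos : (0 : ℝ) < 4)]
    rw [← e]
    exact Complex.abs_im_le_norm ρ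
  have hinv : ‖(1 / ρ) ^ (((a + 1) / 2 : ℝ) : ℂ)‖ ≤
      (|t - s| / (4 * (|t| * |s|))) ^ (-((a + 1) / 2)) := by
    rw [Complex.norm_cpow_real, norm_div, norm_one, one_div, Real.inv_rpow (norm_nonneg _),
      ← Real.rpow_neg (norm_nonneg _)]
    exact Real.rpow_le_rpow_of_nonpos (by positivity) hρn (by linarith)
  rw [norm_mul, norm_mul, norm_mul, norm_mul, norm_mul (_ ^ _), Complex.norm_exp_ofReal_mul_I, RCLike.norm_conj,
    norm_propCoeff, norm_propCoeff]
  have h2 : ‖(1 / 2 : ℂ)‖ = 2⁻¹ := by norm_num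
  rw [h2]
  refine (mul_le_mul_of_nonneg_left (mul_le_mul_of_nonneg_left (mul_le_mul hinv h1
    (norm_nonneg _) (by positivity)) (by norm_num)) (by positivity)).trans (le_of_eq ?_)
  have e2 : (2 : ℝ) ^ (-a) = 2 ^ (1 - (a + 1) / 2) * 2 ^ (1 - (a + 1) / 2) * 2⁻¹ := by
    rw [← Real.rpow_add two_pos, ← Real.rpow_neg_one, ← Real.rpow_add two_pos]
    congr 1; ring
  have e3 : (2 * |t|) ^ (-((a + 1) / 2)) * (2 * |s|) ^ (-((a + 1) / 2)) *
      (|t - s| / (4 * (|t| * |s|))) ^ (-((a + 1) / 2)) = |t - s| ^ (-((a + 1) / 2)) := by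
    rw [← Real.mul_rpow (by positivity) (by positivity),
      ← Real.mul_rpow (by positivity) (by positivity)]
    congr 1
    field_simp
    norm_num
  rw [e2, ← e3]
  ring

theorem ofReal_norm_besselE {b : ℝ} (hb : 0 < b) {x : ℝ} (hx : 0 ≤ x) :
    ((‖besselE b x‖ : ℝ) : ℂ) = besselE b x := by
  rw [besselE_ofReal, Complex.norm_real, Real.norm_of_nonneg]
  refine tsum_nonneg fun k => ?_
  have := Real.Gamma_pos_of_pos (show 0 < k + b by positivity)
  positivity

theorem norm_pairKernel_self {a δ : ℝ} (ha : 0 ≤ a) (hδ : 0 < δ) (t y y' : ℝ) :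
    ((‖pairKernel a δ t t y y'‖ : ℝ) : ℂ) = ((‖propCoeff a t‖ ^ 2 * (1 / 2) *
      (1 / δ) ^ ((a + 1) / 2) * Real.exp (-(y / (4 * t)) ^ 2 / δ) : ℝ) : ℂ) *
      (Complex.exp (-(((1 / (4 * t)) ^ 2 / δ : ℝ) : ℂ) * ((y' ^ 2 : ℝ) : ℂ)) *
        besselE ((a + 1) / 2) ((((y / (4 * t)) ^ 2 * (1 / (4 * t)) ^ 2 / δ ^ 2 : ℝ) : ℂ) *
          ((y' ^ 2 : ℝ) : ℂ))) := by
  rw [pairKernel_eq ha hδ]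
  have hb0 : 0 < (a + 1) / 2 := by linarith
  have e0 : (δ + ((1 / (4 * t) - 1 / (4 * t) : ℝ) : ℂ) * Complex.I) = δ := by simp
  rw [e0, norm_mul, norm_mul, norm_mul, norm_mul, norm_mul (_ ^ _), Complex.norm_exp_ofReal_mul_I, RCLike.norm_conj,
    Complex.norm_cpow_real, norm_mul, Complex.norm_exp]
  have e1 : (((-(y / (4 * t)) ^ 2 : ℝ) : ℂ) * ((-(y' / (4 * t)) ^ 2 : ℝ) : ℂ) / (δ : ℂ) ^ 2) =
      (((y / (4 * t)) ^ 2 * (y' / (4 * t)) ^ 2 / δ ^ 2 : ℝ) : ℂ) := by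
    push_cast; ring
  have e2 : ((((-(y / (4 * t)) ^ 2 : ℝ) : ℂ) + ((-(y' / (4 * t)) ^ 2 : ℝ) : ℂ)) / (δ : ℂ)).re =
      -(y / (4 * t)) ^ 2 / δ + -((1 / (4 * t)) ^ 2 / δ) * y' ^ 2 := by
    rw [← Complex.ofReal_add, ← Complex.ofReal_div, Complex.ofReal_re]
    ring
  have e3 : ‖(1 / (δ : ℂ))‖ = 1 / δ := by
    rw [norm_div, norm_one, Complex.norm_real, Real.norm_of_nonneg hδ.le]
  have e4 : ((((y / (4 * t)) ^ 2 * (1 / (4 * t)) ^ 2 / δ ^ 2 : ℝ) : ℂ) * ((y' ^ 2 : ℝ) : ℂ)) =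
      (((y / (4 * t)) ^ 2 * (y' / (4 * t)) ^ 2 / δ ^ 2 : ℝ) : ℂ) := by
    push_cast; ring
  have e5 : ‖(1 / 2 : ℂ)‖ = 1 / 2 := by norm_num
  rw [e1, e2, e3, e4, e5, Real.exp_add]
  rw [← ofReal_norm_besselE hb0 (by positivity)]
  push_cast
  simp only [Complex.norm_real, norm_norm]
  ring

theorem integral_norm_pairKernel_self {a δ t : ℝ} (ha : 0 ≤ a) (hδ : 0 < δ) (ht : t ≠ 0) (y : ℝ) :
    ∫ y', ‖pairKernel a δ t t y y'‖ ∂powMeasure a = 1 := by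
  have hb0 : 0 < (a + 1) / 2 := by linarith
  have ht' : 0 < |t| := abs_pos.2 ht
  have hκ : 0 < (1 / (4 * t)) ^ 2 / δ := by positivity
  have h : ((∫ y', ‖pairKernel a δ t t y y'‖ ∂powMeasure a : ℝ) : ℂ) = ((1 : ℝ) : ℂ) := by
    rw [← integral_complex_ofReal]
    simp only [norm_pairKernel_self ha hδ]
    rw [integral_const_mul]
    have h1 := integral_comp_sq_powMeasure a (fun v : ℝ =>
      Complex.exp (-(((1 / (4 * t)) ^ 2 / δ : ℝ) : ℂ) * v) * besselE ((a + 1) / 2)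
        ((((y / (4 * t)) ^ 2 * (1 / (4 * t)) ^ 2 / δ ^ 2 : ℝ) : ℂ) * v))
    rw [h1, integral_exp_mul_besselE hb0 (by rw [Complex.ofReal_re]; exact hκ), Complex.real_smul,
      ← Complex.ofReal_one, ← Complex.ofReal_div, ← Complex.ofReal_div, ← Complex.ofReal_exp,
      ← Complex.ofReal_cpow (by positivity), ← Complex.ofReal_mul, ← Complex.ofReal_mul,
      ← Complex.ofReal_mul]
    congr 1
    have e1 : (y / (4 * t)) ^ 2 * (1 / (4 * t)) ^ 2 / δ ^ 2 / ((1 / (4 * t)) ^ 2 / δ) =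
        (y / (4 * t)) ^ 2 / δ := by field_simp
    have e2 : Real.exp (-(y / (4 * t)) ^ 2 / δ) * Real.exp ((y / (4 * t)) ^ 2 / δ) = 1 := by
      rw [← Real.exp_add, neg_div, neg_add_cancel, Real.exp_zero]
    have e3 : (1 / δ) ^ ((a + 1) / 2) * (1 / ((1 / (4 * t)) ^ 2 / δ)) ^ ((a + 1) / 2) =
        (4 * |t|) ^ ((a + 1) / 2) * (4 * |t|) ^ ((a + 1) / 2) := by
      rw [← Real.mul_rpow (by positivity) (by positivity),
        ← Real.mul_rpow (by positivity) (by positivity)]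
      congr 1
      have : |t| * |t| = t * t := abs_mul_abs_self t
      field_simp
      nlinarith
    have e4 : ‖propCoeff a t‖ * (4 * |t|) ^ ((a + 1) / 2) = 2 := by
      rw [norm_propCoeff, mul_assoc, show 4 * |t| = 2 * (2 * |t|) by ring,
        Real.mul_rpow two_pos.le (show 0 ≤ 2 * |t| by positivity), mul_left_comm (_ ^ _) (2 ^ _) (_ ^ _),
        ← Real.rpow_add (by positivity), neg_add_cancel, Real.rpow_zero, mul_one,
        ← Real.rpow_add two_pos]
      simp
    rw [e1]
    calc _ = (1 / 2 * (1 / 2)) * ‖propCoeff a t‖ ^ 2 * ((1 / δ) ^ ((a + 1) / 2) *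
          (1 / ((1 / (4 * t)) ^ 2 / δ)) ^ ((a + 1) / 2)) *
          (Real.exp (-(y / (4 * t)) ^ 2 / δ) * Real.exp ((y / (4 * t)) ^ 2 / δ)) := by ring
      _ = (1 / 2 * (1 / 2)) * (‖propCoeff a t‖ * (4 * |t|) ^ ((a + 1) / 2)) ^ 2 := by
        rw [e2, e3]; ring
      _ = 1 := by rw [e4]; norm_num
  exact_mod_cast h

theorem integrable_norm_pairKernel_self {a δ t : ℝ} (ha : 0 ≤ a) (hδ : 0 < δ) (ht : t ≠ 0)
    (y : ℝ) : Integrable (fun y' => ‖pairKernel a δ t t y y'‖) (powMeasure a) :=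
  Integrable.of_integral_ne_zero (by rw [integral_norm_pairKernel_self ha hδ ht]; exact one_ne_zero)

theorem norm_pairKernel_self_comm {a δ t : ℝ} (ha : 0 ≤ a) (hδ : 0 < δ) (y y' : ℝ) :
    ‖pairKernel a δ t t y y'‖ = ‖pairKernel a δ t t y' y‖ := by
  have h : ((‖pairKernel a δ t t y y'‖ : ℝ) : ℂ) = ((‖pairKernel a δ t t y' y‖ : ℝ) : ℂ) := by
    rw [norm_pairKernel_self ha hδ, norm_pairKernel_self ha hδ]
    have e : ∀ (c u : ℝ) (z E : ℂ), ((c * Real.exp u : ℝ) : ℂ) * (Complex.exp z * E) =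
        c * (Complex.exp (u + z) * E) := by
      intro c u z E
      rw [Complex.ofReal_mul, Complex.ofReal_exp, Complex.exp_add]
      ring
    rw [e, e]
    congr 3 <;> push_cast <;> ring
  exact_mod_cast h

theorem integrable_exp_neg_mul_sq_powMeasure {s δ : ℝ} (hs : -1 < s) (hδ : 0 < δ) :
    Integrable (fun x : ℝ => Real.exp (-δ * x ^ 2)) (powMeasure s) := by
  rw [integrable_powMeasure]
  have h := integrableOn_rpow_mul_exp_neg_mul_rpow (p := 2) hs two_pos hδ
  refine h.congr_fun (fun x _ => ?_) measurableSet_Ioi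
  simp

section Fubini

variable {X Ω₁ Ω₂ : Type*} [MeasurableSpace X] [MeasurableSpace Ω₁] [MeasurableSpace Ω₂]
  {μ : Measure X} {m₁ : Measure Ω₁} {m₂ : Measure Ω₂}
  {w : X → ℝ} {H₁ : X → Ω₁ → ℂ} {H₂ : X → Ω₂ → ℂ} {F₁ : Ω₁ → ℝ} {F₂ : Ω₂ → ℝ}

theorem integrable_weighted_product (hw : Integrable w μ)
    (hH₁ : Measurable (Function.uncurry H₁)) (hH₂ : Measurable (Function.uncurry H₂))
    (hF₁ : Integrable F₁ m₁) (hF₂ : Integrable F₂ m₂)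
    (hb₁ : ∀ x ω, ‖H₁ x ω‖ ≤ F₁ ω) (hb₂ : ∀ x ω, ‖H₂ x ω‖ ≤ F₂ ω) :
    Integrable (fun q : X × (Ω₁ × Ω₂) => (w q.1 : ℂ) * (H₁ q.1 q.2.1 * conj (H₂ q.1 q.2.2)))
      (μ.prod (m₁.prod m₂)) := by
  have hd : Integrable (fun q : X × (Ω₁ × Ω₂) => ‖w q.1‖ * (F₁ q.2.1 * F₂ q.2.2))
      (μ.prod (m₁.prod m₂)) := hw.norm.mul_prod (hF₁.mul_prod hF₂)
  have hwm : AEStronglyMeasurable (fun q : X × (Ω₁ × Ω₂) => (w q.1 : ℂ))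
      (μ.prod (m₁.prod m₂)) :=
    Complex.continuous_ofReal.comp_aestronglyMeasurable hw.aestronglyMeasurable.comp_fst
  have h1 : Measurable fun q : X × (Ω₁ × Ω₂) => H₁ q.1 q.2.1 :=
    hH₁.comp (measurable_fst.prodMk (measurable_fst.comp measurable_snd))
  have h2 : Measurable fun q : X × (Ω₁ × Ω₂) => conj (H₂ q.1 q.2.2) :=
    Complex.continuous_conj.measurable.comp
      (hH₂.comp (measurable_fst.prodMk (measurable_snd.comp measurable_snd)))
  refine hd.mono' (hwm.mul (h1.mul h2).aestronglyMeasurable) (Eventually.of_forall fun q => ?_)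
  rw [norm_mul, norm_mul, RCLike.norm_conj, Complex.norm_real]
  have := (norm_nonneg _).trans (hb₁ q.1 q.2.1)
  gcongr
  · exact hb₁ _ _
  · exact hb₂ _ _

theorem integrable_integral_weighted_product [SFinite μ] [SFinite m₁] [SFinite m₂]
    (hw : Integrable w μ)
    (hH₁ : Measurable (Function.uncurry H₁)) (hH₂ : Measurable (Function.uncurry H₂))
    (hF₁ : Integrable F₁ m₁) (hF₂ : Integrable F₂ m₂)
    (hb₁ : ∀ x ω, ‖H₁ x ω‖ ≤ F₁ ω) (hb₂ : ∀ x ω, ‖H₂ x ω‖ ≤ F₂ ω) :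
    Integrable (fun p : Ω₁ × Ω₂ => ∫ x, (w x : ℂ) * (H₁ x p.1 * conj (H₂ x p.2)) ∂μ)
      (m₁.prod m₂) :=
  (integrable_weighted_product hw hH₁ hH₂ hF₁ hF₂ hb₁ hb₂).integral_prod_right

theorem integral_weighted_product [SFinite μ] [SFinite m₁] [SFinite m₂] (hw : Integrable w μ)
    (hH₁ : Measurable (Function.uncurry H₁)) (hH₂ : Measurable (Function.uncurry H₂))
    (hF₁ : Integrable F₁ m₁) (hF₂ : Integrable F₂ m₂)
    (hb₁ : ∀ x ω, ‖H₁ x ω‖ ≤ F₁ ω) (hb₂ : ∀ x ω, ‖H₂ x ω‖ ≤ F₂ ω) :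
    ∫ x, (w x : ℂ) * ((∫ ω, H₁ x ω ∂m₁) * conj (∫ ω, H₂ x ω ∂m₂)) ∂μ =
      ∫ p : Ω₁ × Ω₂, ∫ x, (w x : ℂ) * (H₁ x p.1 * conj (H₂ x p.2)) ∂μ ∂(m₁.prod m₂) := by
  have hint := integrable_weighted_product hw hH₁ hH₂ hF₁ hF₂ hb₁ hb₂
  rw [← integral_integral_swap hint]
  refine integral_congr_ae (Eventually.of_forall fun x => ?_)
  dsimp only
  rw [integral_const_mul, ← integral_conj, ← integral_prod_mul]

end Fubini

theorem integral_prod_markov_mul {Y : Type*} [MeasurableSpace Y] {μ : Measure Y} [SFinite μ]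
    {h : Y → ℝ} (hh : Integrable h μ) {k : Y → Y → ℝ} (hk : Measurable fun p : Y × Y => k p.1 p.2)
    (hk0 : ∀ y y', 0 ≤ k y y') (hki : ∀ y, Integrable (k y) μ) (hk1 : ∀ y, ∫ y', k y y' ∂μ = 1) :
    Integrable (fun p : Y × Y => k p.1 p.2 * h p.1) (μ.prod μ) ∧
      ∫ p : Y × Y, k p.1 p.2 * h p.1 ∂(μ.prod μ) = ∫ y, h y ∂μ := by
  have hint : Integrable (fun p : Y × Y => k p.1 p.2 * h p.1) (μ.prod μ) := by
    have hm : AEStronglyMeasurable (fun p : Y × Y => k p.1 p.2 * h p.1) (μ.prod μ) :=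
      hk.aestronglyMeasurable.mul hh.aestronglyMeasurable.comp_fst
    refine (integrable_prod_iff hm).2 ⟨Eventually.of_forall fun y => (hki y).mul_const (h y), ?_⟩
    refine hh.norm.congr (Eventually.of_forall fun y => ?_)
    simp only [norm_mul, Real.norm_of_nonneg (hk0 _ _)]
    rw [integral_mul_const, hk1, one_mul]
  refine ⟨hint, ?_⟩
  rw [integral_prod _ hint]
  simp only [integral_mul_const, hk1, one_mul]

/-- The operator with kernel `S_a(x, y, -t)`. -/
noncomputable def propagate (a t : ℝ) (f : ℝ → ℂ) (x : ℝ) : ℂ :=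
  ∫ y, propKernel a t x y * f y ∂powMeasure a

section

variable {a δ t s : ℝ} {f g : ℝ → ℂ}

theorem measurable_propKernel_mul (ha : 0 ≤ a) (t : ℝ) (hf : Measurable f) :
    Measurable (Function.uncurry fun x y => propKernel a t x y * f y) := by
  have h := (measurable_propKernel ha).comp
    (measurable_const.prodMk measurable_id : Measurable fun p : ℝ × ℝ => (t, p))
  exact h.mul (hf.comp measurable_snd)

theorem norm_propKernel_mul_le (ha : 0 ≤ a) (t x y : ℝ) :
    ‖propKernel a t x y * f y‖ ≤ ‖propCoeff a t‖ * (Real.Gamma ((a + 1) / 2))⁻¹ * ‖f y‖ := by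
  rw [norm_mul]
  gcongr
  exact norm_propKernel_le ha t x y

theorem integral_propagate_mul_conj (ha : 0 ≤ a) (hδ : 0 < δ) (hf : Measurable f)
    (hg : Measurable g) (hfi : Integrable f (powMeasure a)) (hgi : Integrable g (powMeasure a)) :
    ∫ x, (Real.exp (-δ * x ^ 2) : ℂ) * (propagate a t f x * conj (propagate a s g x)) ∂powMeasure a =
      ∫ p : ℝ × ℝ, pairKernel a δ t s p.1 p.2 * (f p.1 * conj (g p.2))
        ∂(powMeasure a).prod (powMeasure a) := by
  have h := integral_weighted_product (integrable_exp_neg_mul_sq_powMeasure (s := a) (by linarith) hδ)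
    (measurable_propKernel_mul ha t hf) (measurable_propKernel_mul ha s hg)
    (hfi.norm.const_mul _) (hgi.norm.const_mul _)
    (norm_propKernel_mul_le ha t) (norm_propKernel_mul_le ha s)
  unfold propagate
  rw [h]
  refine integral_congr_ae (Eventually.of_forall fun p => ?_)
  dsimp only
  rw [pairKernel, ← integral_mul_const]
  refine integral_congr_ae (Eventually.of_forall fun x => ?_)
  simp only [map_mul]
  ring

theorem measurable_pairKernel (ha : 0 ≤ a) (hδ : 0 < δ) (t s : ℝ) :
    Measurable fun p : ℝ × ℝ => pairKernel a δ t s p.1 p.2 := by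
  simp only [pairKernel_eq ha hδ]
  have h2 := (continuous_besselE (b := (a + 1) / 2) (by linarith)).measurable
  fun_prop

theorem norm_propagate_le (ha : 0 ≤ a) (hfi : Integrable f (powMeasure a)) (x : ℝ) :
    ‖propagate a t f x‖ ≤
      ‖propCoeff a t‖ * (Real.Gamma ((a + 1) / 2))⁻¹ * ∫ y, ‖f y‖ ∂powMeasure a := by
  rw [← integral_const_mul]
  exact norm_integral_le_of_norm_le (hfi.norm.const_mul _)
    (Eventually.of_forall fun y => norm_propKernel_mul_le ha t x y)

theorem measurable_propagate (ha : 0 ≤ a) (hf : Measurable f) : Measurable (propagate a t f) :=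
  ((measurable_propKernel_mul ha t hf).stronglyMeasurable.integral_prod_right).measurable

theorem integral_norm_propagate_sq_le (ha : 0 ≤ a) (hδ : 0 < δ) (ht : t ≠ 0) (hf : Measurable f)
    (hfi : Integrable f (powMeasure a)) (hf2 : Integrable (fun y => ‖f y‖ ^ 2) (powMeasure a)) :
    ∫ x, Real.exp (-δ * x ^ 2) * ‖propagate a t f x‖ ^ 2 ∂powMeasure a ≤
      ∫ y, ‖f y‖ ^ 2 ∂powMeasure a := by
  set μ := powMeasure a with hμ
  have h := integral_propagate_mul_conj (t := t) (s := t) ha hδ hf hf hfi hfi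
  have h0 : ((∫ x, Real.exp (-δ * x ^ 2) * ‖propagate a t f x‖ ^ 2 ∂μ : ℝ) : ℂ) =
      ∫ x, (Real.exp (-δ * x ^ 2) : ℂ) * (propagate a t f x * conj (propagate a t f x)) ∂μ := by
    rw [← integral_complex_ofReal]
    congr 1
    ext x
    rw [Complex.mul_conj, Complex.normSq_eq_norm_sq]
    push_cast
    ring
  have hm := measurable_pairKernel ha hδ t t
  obtain ⟨hi1, he1⟩ := integral_prod_markov_mul hf2 (k := fun y y' => ‖pairKernel a δ t t y y'‖) hm.norm
    (fun _ _ => norm_nonneg _) (fun y => integrable_norm_pairKernel_self ha hδ ht y)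
    (fun y => integral_norm_pairKernel_self ha hδ ht y)
  have hi2 := hi1.swap
  have he2 := he1
  rw [← integral_prod_swap] at he2
  simp only [Function.comp_def, Prod.fst_swap, Prod.snd_swap] at hi2 he2
  have hsum := ((hi1.add hi2).const_mul (1 / 2))
  have hbound : ‖∫ p : ℝ × ℝ, pairKernel a δ t t p.1 p.2 * (f p.1 * conj (f p.2)) ∂(μ.prod μ)‖ ≤
      ∫ y, ‖f y‖ ^ 2 ∂μ := by
    refine (norm_integral_le_of_norm_le hsum (Eventually.of_forall fun p => ?_)).trans
      (le_of_eq ?_)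
    · simp only [Pi.add_apply, norm_mul, RCLike.norm_conj]
      rw [norm_pairKernel_self_comm ha hδ p.2 p.1]
      nlinarith [mul_nonneg (norm_nonneg (pairKernel a δ t t p.1 p.2))
        (sq_nonneg (‖f p.1‖ - ‖f p.2‖))]
    · rw [integral_const_mul]
      simp only [Pi.add_apply]
      rw [integral_add hi1 hi2, he1, he2]
      ring
  rw [← h, ← h0, Complex.norm_real] at hbound
  exact (le_abs_self _).trans hbound

/-- Uniform `L²` bound for the bilinear form of the regularised operator `U_s^* e^{-δ x²} U_t`. -/
theorem norm_integral_pairKernel_mul_le (ha : 0 ≤ a) (hδ : 0 < δ) (ht : t ≠ 0) (hs : s ≠ 0)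
    (hf : Measurable f) (hg : Measurable g)
    (hfi : Integrable f (powMeasure a)) (hgi : Integrable g (powMeasure a))
    (hf2 : Integrable (fun y => ‖f y‖ ^ 2) (powMeasure a))
    (hg2 : Integrable (fun y => ‖g y‖ ^ 2) (powMeasure a)) :
    ‖∫ p : ℝ × ℝ, pairKernel a δ t s p.1 p.2 * (f p.1 * conj (g p.2))
        ∂(powMeasure a).prod (powMeasure a)‖ ≤
      (∫ y, ‖f y‖ ^ 2 ∂powMeasure a) ^ (1 / 2 : ℝ) *
        (∫ y, ‖g y‖ ^ 2 ∂powMeasure a) ^ (1 / 2 : ℝ) := by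
  rw [← integral_propagate_mul_conj ha hδ hf hg hfi hgi]
  have hmem : ∀ {t : ℝ} {f : ℝ → ℂ}, Measurable f → Integrable f (powMeasure a) →
      MemLp (fun x => (Real.exp (-(δ / 2) * x ^ 2) : ℂ) * propagate a t f x) (ENNReal.ofReal 2)
        (powMeasure a) := by
    intro t f hf hfi
    have hm := measurable_propagate (t := t) ha hf
    rw [ENNReal.ofReal_ofNat, memLp_two_iff_integrable_sq_norm
      (Measurable.aestronglyMeasurable (by fun_prop))]
    refine ((integrable_exp_neg_mul_sq_powMeasure (s := a) (by linarith) hδ).mul_const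
      ((‖propCoeff a t‖ * (Real.Gamma ((a + 1) / 2))⁻¹ * ∫ y, ‖f y‖ ∂powMeasure a) ^ 2)).mono'
      (Measurable.aestronglyMeasurable (by fun_prop)) (Eventually.of_forall fun x => ?_)
    rw [norm_pow, norm_norm, norm_mul, mul_pow, Complex.norm_real,
      Real.norm_of_nonneg (Real.exp_nonneg _), ← Real.exp_nat_mul]
    refine mul_le_mul (le_of_eq ?_) (pow_le_pow_left₀ (norm_nonneg _)
      (norm_propagate_le ha hfi x) 2) (by positivity) (Real.exp_nonneg _)
    congr 1
    push_cast; ring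
  have hsq : ∀ {t : ℝ} {f : ℝ → ℂ}, t ≠ 0 → Measurable f → Integrable f (powMeasure a) →
      Integrable (fun y => ‖f y‖ ^ 2) (powMeasure a) →
      ∫ x, ‖(Real.exp (-(δ / 2) * x ^ 2) : ℂ) * propagate a t f x‖ ^ (2 : ℝ) ∂powMeasure a ≤
        ∫ y, ‖f y‖ ^ 2 ∂powMeasure a := by
    intro t f ht hf hfi hf2
    refine (le_of_eq ?_).trans (integral_norm_propagate_sq_le ha hδ ht hf hfi hf2)
    congr 1
    ext x
    rw [Real.rpow_two, norm_mul, mul_pow, Complex.norm_real,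
      Real.norm_of_nonneg (Real.exp_nonneg _), ← Real.exp_nat_mul]
    congr 2
    push_cast; ring
  refine (norm_integral_le_integral_norm _).trans ?_
  have hol := integral_mul_norm_le_Lp_mul_Lq (μ := powMeasure a) Real.HolderConjugate.two_two
    (hmem (t := t) hf hfi) (hmem (t := s) hg hgi)
  refine (le_of_eq ?_).trans (hol.trans ?_)
  · congr 1
    ext x
    rw [norm_mul, norm_mul, norm_mul, norm_mul, RCLike.norm_conj, Complex.norm_real,
      Complex.norm_real, Real.norm_of_nonneg (Real.exp_nonneg _),
      Real.norm_of_nonneg (Real.exp_nonneg _),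
      show -δ * x ^ 2 = -(δ / 2) * x ^ 2 + -(δ / 2) * x ^ 2 by ring, Real.exp_add]
    ring
  · exact mul_le_mul (Real.rpow_le_rpow (by positivity) (hsq ht hf hfi hf2) (by norm_num))
      (Real.rpow_le_rpow (by positivity) (hsq hs hg hgi hg2) (by norm_num)) (by positivity)
      (by positivity)

end

theorem rpow_mul_abs_log_le {x H u : ℝ} (hx : 0 < x) (hxH : x ≤ H) (hH : 1 ≤ H)
    (hu : 1 / 8 ≤ u) (hu2 : u ≤ 2) : x ^ u * |Real.log x| ≤ 8 * H ^ 3 := by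
  have hH3 : 1 ≤ H ^ 3 := one_le_pow₀ hH
  rcases le_or_gt x 1 with h1 | h1
  · have h := Real.abs_log_mul_self_rpow_lt x (1 / 8) hx h1 (by norm_num)
    rw [abs_mul, abs_of_pos (Real.rpow_pos_of_pos hx _)] at h
    have h2 : x ^ u ≤ x ^ (1 / 8 : ℝ) := Real.rpow_le_rpow_of_exponent_ge hx h1 hu
    have h3 := mul_le_mul_of_nonneg_right h2 (abs_nonneg (Real.log x))
    norm_num at h h3
    linarith
  · have h2 : x ^ u ≤ H ^ 2 := by
      calc x ^ u ≤ x ^ (2 : ℝ) := Real.rpow_le_rpow_of_exponent_le h1.le hu2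
        _ = x ^ 2 := Real.rpow_two x
        _ ≤ H ^ 2 := pow_le_pow_left₀ hx.le hxH 2
    have h3 : |Real.log x| ≤ H := by
      rw [abs_of_pos (Real.log_pos h1)]
      exact (Real.log_le_self hx.le).trans hxH
    calc x ^ u * |Real.log x| ≤ H ^ 2 * H := by gcongr
      _ ≤ 8 * H ^ 3 := by nlinarith

section

variable {Y : Type*} [MeasurableSpace Y] {m : Measure Y} {κ : Y → ℂ} {h : Y → ℝ} {M H : ℝ}

theorem norm_ofReal_cpow_eq {x : ℝ} (hx : 0 ≤ x) {w : ℂ} (hw : w.re ≠ 0) :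
    ‖(x : ℂ) ^ w‖ = x ^ w.re := Complex.norm_cpow_eq_rpow_re_of_nonneg hx hw

theorem differentiableOn_integral_cpow (hκ : Measurable κ) (hκM : ∀ y, ‖κ y‖ ≤ M)
    (hh : Measurable h) (hh0 : ∀ y, 0 ≤ h y) (hH : 1 ≤ H) (hhH : ∀ y, h y ≤ H)
    (hint : Integrable (fun y => h y ^ (1 / 4 : ℝ)) m) :
    DifferentiableOn ℂ (fun z : ℂ => ∫ y, κ y * (h y : ℂ) ^ ((1 + z) / 2) ∂m)
      {z | -1 / 4 < z.re ∧ z.re < 2} := by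
  intro z₀ hz₀
  set s : Set ℂ := {z | -1 / 4 < z.re ∧ z.re < 2} with hs
  have hopen : IsOpen s :=
    (isOpen_lt continuous_const Complex.continuous_re).inter
      (isOpen_lt Complex.continuous_re continuous_const)
  have hre : ∀ z : ℂ, ((1 + z) / 2).re = (1 + z.re) / 2 := by
    intro z
    rw [show (1 + z) / 2 = ((1 / 2 : ℝ) : ℂ) * (1 + z) by push_cast; ring, Complex.re_ofReal_mul]
    simp
    ring
  have hmeas : ∀ z : ℂ, Measurable fun y => κ y * (h y : ℂ) ^ ((1 + z) / 2) := by
    intro z; fun_prop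
  have hne : ∀ z ∈ s, (1 + z) / 2 ≠ 0 := by
    intro z hz h0
    have := hre z
    rw [h0, Complex.zero_re] at this
    have := hz.1
    linarith
  have hnorm : ∀ z ∈ s, ∀ y, ‖(h y : ℂ) ^ ((1 + z) / 2)‖ = h y ^ ((1 + z.re) / 2) := by
    intro z hz y
    rw [norm_ofReal_cpow_eq (hh0 y), hre]
    rw [hre]
    have := hz.1
    linarith
  have key := hasDerivAt_integral_of_dominated_loc_of_deriv_le (μ := m) (𝕜 := ℂ)
    (F := fun z y => κ y * (h y : ℂ) ^ ((1 + z) / 2)) (x₀ := z₀) (s := s)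
    (F' := fun z y => κ y * ((h y : ℂ) ^ ((1 + z) / 2) * Complex.log (h y) * (1 / 2)))
    (bound := fun y => M * (h y ^ (1 / 4 : ℝ) * (8 * H ^ 3)))
    (hopen.mem_nhds hz₀) (Eventually.of_forall fun z => (hmeas z).aestronglyMeasurable) ?_ ?_ ?_
    ((hint.mul_const _).const_mul _) ?_
  · exact key.2.differentiableAt.differentiableWithinAt
  · refine ((hint.mul_const (H ^ 2)).const_mul M).mono' (hmeas z₀).aestronglyMeasurable
      (Eventually.of_forall fun y => ?_)
    rw [norm_mul, hnorm z₀ hz₀]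
    have hz1 := hz₀.1
    have hz2 := hz₀.2
    have hM0 := (norm_nonneg _).trans (hκM y)
    have hH0 : 0 ≤ H := by linarith
    have e : (1 + z₀.re) / 2 = 1 / 4 + (1 / 4 + z₀.re / 2) := by ring
    refine mul_le_mul (hκM y) ?_ (Real.rpow_nonneg (hh0 y) _) hM0
    rw [e, Real.rpow_add_of_nonneg (hh0 y) (by norm_num) (by linarith)]
    refine mul_le_mul_of_nonneg_left ?_ (Real.rpow_nonneg (hh0 y) _)
    calc h y ^ (1 / 4 + z₀.re / 2) ≤ H ^ (1 / 4 + z₀.re / 2) :=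
          Real.rpow_le_rpow (hh0 y) (hhH y) (by linarith)
      _ ≤ H ^ (2 : ℝ) := Real.rpow_le_rpow_of_exponent_le hH (by linarith)
      _ = H ^ 2 := Real.rpow_two H
  · have : Measurable fun y => κ y * ((h y : ℂ) ^ ((1 + z₀) / 2) * Complex.log (h y) * (1 / 2)) := by
      fun_prop
    exact this.aestronglyMeasurable
  · refine Eventually.of_forall fun y z hz => ?_
    have hM0 := (norm_nonneg _).trans (hκM y)
    have hz1 := hz.1
    have hz2 := hz.2
    rw [norm_mul, norm_mul, norm_mul, hnorm z hz]
    refine mul_le_mul (hκM y) ?_ (mul_nonneg (mul_nonneg (Real.rpow_nonneg (hh0 y) _)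
      (norm_nonneg _)) (norm_nonneg _)) hM0
    rcases (hh0 y).eq_or_lt with h0 | h0
    · rw [← h0]
      simp
    · rw [← Complex.ofReal_log h0.le, Complex.norm_real, Real.norm_eq_abs,
        show (1 + z.re) / 2 = 1 / 4 + (1 / 4 + z.re / 2) by ring, Real.rpow_add h0, mul_assoc, mul_assoc]
      refine mul_le_mul_of_nonneg_left ?_ (by positivity)
      have h1 := rpow_mul_abs_log_le h0 (hhH y) hH (u := 1 / 4 + z.re / 2) (by linarith)
        (by linarith)
      have h2 : 0 ≤ h y ^ (1 / 4 + z.re / 2) * |Real.log (h y)| := by positivity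
      have h3 : ‖(1 / 2 : ℂ)‖ = 1 / 2 := by norm_num
      rw [h3, ← mul_assoc]
      linarith
  · refine Eventually.of_forall fun y z hz => ?_
    have hd : HasDerivAt (fun z : ℂ => (1 + z) / 2) (1 / 2) z :=
      ((hasDerivAt_id z).const_add 1).div_const 2
    exact (hd.const_cpow (Or.inr (hne z hz))).const_mul (κ y)

theorem norm_integral_cpow_le (hκM : ∀ y, ‖κ y‖ ≤ M)
    (hh0 : ∀ y, 0 ≤ h y) {z : ℂ} (hz0 : -1 < z.re)
    (hint : Integrable (fun y => h y ^ ((1 + z.re) / 2)) m) :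
    ‖∫ y, κ y * (h y : ℂ) ^ ((1 + z) / 2) ∂m‖ ≤ M * ∫ y, h y ^ ((1 + z.re) / 2) ∂m := by
  rw [← integral_const_mul]
  refine norm_integral_le_of_norm_le (hint.const_mul M) (Eventually.of_forall fun y => ?_)
  have hre : ((1 + z) / 2).re = (1 + z.re) / 2 := by
    rw [show (1 + z) / 2 = ((1 / 2 : ℝ) : ℂ) * (1 + z) by push_cast; ring, Complex.re_ofReal_mul]
    simp
    ring
  rw [norm_mul, norm_ofReal_cpow_eq (hh0 y) (by rw [hre]; linarith), hre]
  exact mul_le_mul_of_nonneg_right (hκM y) (Real.rpow_nonneg (hh0 y) _)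

end

theorem one_add_div_two_re (z : ℂ) : ((1 + z) / 2).re = (1 + z.re) / 2 := by
  rw [show (1 + z) / 2 = ((1 / 2 : ℝ) : ℂ) * (1 + z) by push_cast; ring, Complex.re_ofReal_mul]
  simp
  ring

theorem conj_ofReal_cpow {x : ℝ} (hx : 0 ≤ x) (w : ℂ) :
    conj ((x : ℂ) ^ (conj w)) = (x : ℂ) ^ w := by
  rw [← Complex.conj_cpow _ _ (by rw [Complex.arg_ofReal_of_nonneg hx]; exact Real.pi_ne_zero.symm),
    Complex.conj_ofReal]

theorem norm_mul_cpow_le {x : ℝ} {w z : ℂ} (hx : 0 ≤ x) (hw : ‖w‖ ≤ 1) (hz : z.re = 0) :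
    ‖w * (x : ℂ) ^ ((1 + z) / 2)‖ ≤ x ^ (1 / 2 : ℝ) := by
  rw [norm_mul, norm_ofReal_cpow_eq hx (by rw [one_add_div_two_re, hz]; norm_num),
    one_add_div_two_re, hz, add_zero]
  exact mul_le_of_le_one_left (Real.rpow_nonneg hx _) hw

section

variable {Y : Type*} [MeasurableSpace Y] {μ : Measure Y} {u v : Y → ℝ} {σ τ f g : Y → ℂ}
  {k : Y × Y → ℂ} {M H c θ p : ℝ}

theorem integrable_rpow_of_bounded (hu : Measurable u) (hu0 : ∀ y, 0 ≤ u y) (huH : ∀ y, u y ≤ H)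
    (hint : Integrable (fun y => u y ^ (1 / 4 : ℝ)) μ) (hc : 1 / 4 ≤ c) :
    Integrable (fun y => u y ^ c) μ := by
  refine (hint.mul_const (H ^ (c - 1 / 4))).mono' (hu.pow_const c).aestronglyMeasurable
    (Eventually.of_forall fun y => ?_)
  rw [Real.norm_of_nonneg (Real.rpow_nonneg (hu0 y) _)]
  calc u y ^ c = u y ^ (1 / 4 : ℝ) * u y ^ (c - 1 / 4) := by
        rw [← Real.rpow_add_of_nonneg (hu0 y) (by norm_num) (by linarith)]; congr 1; ring
    _ ≤ _ := mul_le_mul_of_nonneg_left (Real.rpow_le_rpow (hu0 y) (huH y) (by linarith))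
        (Real.rpow_nonneg (hu0 y) _)

theorem norm_integral_mul_cpow_le_of_re_zero [SFinite μ]
    (hL2 : ∀ f g : Y → ℂ, Measurable f → Measurable g → Integrable f μ → Integrable g μ →
      Integrable (fun y => ‖f y‖ ^ 2) μ → Integrable (fun y => ‖g y‖ ^ 2) μ →
      ‖∫ q, k q * (f q.1 * conj (g q.2)) ∂μ.prod μ‖ ≤
        (∫ y, ‖f y‖ ^ 2 ∂μ) ^ (1 / 2 : ℝ) * (∫ y, ‖g y‖ ^ 2 ∂μ) ^ (1 / 2 : ℝ))
    (hσ : Measurable σ) (hτ : Measurable τ) (hσ1 : ∀ y, ‖σ y‖ ≤ 1) (hτ1 : ∀ y, ‖τ y‖ ≤ 1)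
    (hu : Measurable u) (hv : Measurable v) (hu0 : ∀ y, 0 ≤ u y) (hv0 : ∀ y, 0 ≤ v y)
    (huH : ∀ y, u y ≤ H) (hvH : ∀ y, v y ≤ H)
    (hui : Integrable (fun y => u y ^ (1 / 4 : ℝ)) μ)
    (hvi : Integrable (fun y => v y ^ (1 / 4 : ℝ)) μ) {z : ℂ} (hz : z.re = 0) :
    ‖∫ q : Y × Y, k q * (σ q.1 * conj (τ q.2)) *
        ((u q.1 * v q.2 : ℝ) : ℂ) ^ ((1 + z) / 2) ∂μ.prod μ‖ ≤
      (∫ y, u y ∂μ) ^ (1 / 2 : ℝ) * (∫ y, v y ∂μ) ^ (1 / 2 : ℝ) := by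
  have aux : ∀ {σ : Y → ℂ} {u : Y → ℝ} {z : ℂ}, Measurable σ → (∀ y, ‖σ y‖ ≤ 1) → Measurable u →
      (∀ y, 0 ≤ u y) → (∀ y, u y ≤ H) → Integrable (fun y => u y ^ (1 / 4 : ℝ)) μ → z.re = 0 →
      Measurable (fun y => σ y * (u y : ℂ) ^ ((1 + z) / 2)) ∧
      Integrable (fun y => σ y * (u y : ℂ) ^ ((1 + z) / 2)) μ ∧
      Integrable (fun y => ‖σ y * (u y : ℂ) ^ ((1 + z) / 2)‖ ^ 2) μ ∧
      ∫ y, ‖σ y * (u y : ℂ) ^ ((1 + z) / 2)‖ ^ 2 ∂μ ≤ ∫ y, u y ∂μ := by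
    intro σ u z hσ hσ1 hu hu0 huH hui hz
    have hm : Measurable (fun y => σ y * (u y : ℂ) ^ ((1 + z) / 2)) := by fun_prop
    have hle := fun y => norm_mul_cpow_le (hu0 y) (hσ1 y) hz
    have h1 : Integrable u μ := by
      simpa using integrable_rpow_of_bounded hu hu0 huH hui (c := 1) (by norm_num)
    have hsq : ∀ y, ‖σ y * (u y : ℂ) ^ ((1 + z) / 2)‖ ^ 2 ≤ u y := by
      intro y
      calc _ ≤ (u y ^ (1 / 2 : ℝ)) ^ 2 := pow_le_pow_left₀ (norm_nonneg _) (hle y) 2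
        _ = u y := by rw [← Real.sqrt_eq_rpow, Real.sq_sqrt (hu0 y)]
    have hi2 : Integrable (fun y => ‖σ y * (u y : ℂ) ^ ((1 + z) / 2)‖ ^ 2) μ := by
      refine h1.mono' (hm.norm.pow_const 2).aestronglyMeasurable (Eventually.of_forall fun y => ?_)
      rw [Real.norm_of_nonneg (sq_nonneg _)]
      exact hsq y
    exact ⟨hm, (integrable_rpow_of_bounded hu hu0 huH hui (c := 1 / 2) (by norm_num)).mono'
      hm.aestronglyMeasurable (Eventually.of_forall hle), hi2, integral_mono hi2 h1 hsq⟩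
  obtain ⟨f1, f2, f3, f4⟩ := aux hσ hσ1 hu hu0 huH hui hz
  obtain ⟨g1, g2, g3, g4⟩ := aux hτ hτ1 hv hv0 hvH hvi (z := conj z) (by simpa using hz)
  have key := hL2 _ _ f1 g1 f2 g2 f3 g3
  have e : ∀ q : Y × Y, k q * (σ q.1 * conj (τ q.2)) *
      ((u q.1 * v q.2 : ℝ) : ℂ) ^ ((1 + z) / 2) = k q * (σ q.1 * (u q.1 : ℂ) ^ ((1 + z) / 2) *
        conj (τ q.2 * (v q.2 : ℂ) ^ ((1 + conj z) / 2))) := by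
    intro q
    have e2 : (1 + conj z) / 2 = conj ((1 + z) / 2) := by
      rw [map_div₀, map_add, map_one, map_ofNat]
    rw [e2, map_mul, conj_ofReal_cpow (hv0 _), Complex.ofReal_mul,
      Complex.mul_cpow_ofReal_nonneg (hu0 _) (hv0 _)]
    ring
  simp_rw [e]
  refine key.trans (mul_le_mul (Real.rpow_le_rpow (integral_nonneg fun y => sq_nonneg _) f4
    (by norm_num)) (Real.rpow_le_rpow (integral_nonneg fun y => sq_nonneg _) g4 (by norm_num))
    (Real.rpow_nonneg (integral_nonneg fun y => sq_nonneg _) _)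
    (Real.rpow_nonneg (integral_nonneg fun y => hu0 y) _))

theorem norm_integral_mul_cpow_le_interpolated [SFinite μ] (hk : Measurable k) (hM : 0 ≤ M)
    (hkM : ∀ q, ‖k q‖ ≤ M)
    (hL2 : ∀ f g : Y → ℂ, Measurable f → Measurable g → Integrable f μ → Integrable g μ →
      Integrable (fun y => ‖f y‖ ^ 2) μ → Integrable (fun y => ‖g y‖ ^ 2) μ →
      ‖∫ q, k q * (f q.1 * conj (g q.2)) ∂μ.prod μ‖ ≤
        (∫ y, ‖f y‖ ^ 2 ∂μ) ^ (1 / 2 : ℝ) * (∫ y, ‖g y‖ ^ 2 ∂μ) ^ (1 / 2 : ℝ))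
    (hσ : Measurable σ) (hτ : Measurable τ) (hσ1 : ∀ y, ‖σ y‖ ≤ 1) (hτ1 : ∀ y, ‖τ y‖ ≤ 1)
    (hu : Measurable u) (hv : Measurable v) (hu0 : ∀ y, 0 ≤ u y) (hv0 : ∀ y, 0 ≤ v y)
    (hH : 1 ≤ H) (huH : ∀ y, u y ≤ H) (hvH : ∀ y, v y ≤ H)
    (hui : Integrable (fun y => u y ^ (1 / 4 : ℝ)) μ)
    (hvi : Integrable (fun y => v y ^ (1 / 4 : ℝ)) μ) (hθ0 : 0 ≤ θ) (hθ1 : θ ≤ 1) :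
    ‖∫ q : Y × Y, k q * (σ q.1 * conj (τ q.2)) *
        ((u q.1 * v q.2 : ℝ) : ℂ) ^ ((1 + (θ : ℂ)) / 2) ∂μ.prod μ‖ ≤
      M ^ θ * (∫ y, u y ∂μ) ^ ((1 + θ) / 2) * (∫ y, v y ∂μ) ^ ((1 + θ) / 2) := by
  have hκ : Measurable fun q : Y × Y => k q * (σ q.1 * conj (τ q.2)) := by
    have h1 : Measurable fun q : Y × Y => conj (τ q.2) :=
      Complex.continuous_conj.measurable.comp (hτ.comp measurable_snd)
    exact hk.mul ((hσ.comp measurable_fst).mul h1)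
  have hκM : ∀ q : Y × Y, ‖k q * (σ q.1 * conj (τ q.2))‖ ≤ M := by
    intro q
    rw [norm_mul, norm_mul, RCLike.norm_conj]
    calc ‖k q‖ * (‖σ q.1‖ * ‖τ q.2‖) ≤ M * (1 * 1) := by
          gcongr
          exacts [hkM q, hσ1 _, hτ1 _]
      _ = M := by ring
  have hh : Measurable fun q : Y × Y => u q.1 * v q.2 := by fun_prop
  have hh0 : ∀ q : Y × Y, 0 ≤ u q.1 * v q.2 := fun q => mul_nonneg (hu0 _) (hv0 _)
  have hhH : ∀ q : Y × Y, u q.1 * v q.2 ≤ H * H := fun q =>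
    mul_le_mul (huH _) (hvH _) (hv0 _) (by linarith)
  have hint : Integrable (fun q : Y × Y => (u q.1 * v q.2) ^ (1 / 4 : ℝ)) (μ.prod μ) := by
    have := hui.mul_prod hvi
    refine this.congr (Eventually.of_forall fun q => ?_)
    exact (Real.mul_rpow (hu0 _) (hv0 _)).symm
  have hpow : ∀ c : ℝ, 1 / 4 ≤ c →
      Integrable (fun q : Y × Y => (u q.1 * v q.2) ^ c) (μ.prod μ) := fun c hc =>
    integrable_rpow_of_bounded hh hh0 hhH hint hc
  have hHH : 1 ≤ H * H := one_le_mul_of_one_le_of_one_le hH hH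
  have hdiff := differentiableOn_integral_cpow hκ hκM hh hh0 hHH hhH hint
  have hI0 : 0 ≤ ∫ y, u y ∂μ := integral_nonneg hu0
  have hJ0 : 0 ≤ ∫ y, v y ∂μ := integral_nonneg hv0
  have key := Complex.HadamardThreeLines.norm_le_interp_of_mem_verticalClosedStrip₀₁'
    (fun z : ℂ => ∫ q : Y × Y, k q * (σ q.1 * conj (τ q.2)) *
        ((u q.1 * v q.2 : ℝ) : ℂ) ^ ((1 + z) / 2) ∂μ.prod μ) (z := (θ : ℂ))
    (a := (∫ y, u y ∂μ) ^ (1 / 2 : ℝ) * (∫ y, v y ∂μ) ^ (1 / 2 : ℝ))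
    (b := M * ((∫ y, u y ∂μ) * ∫ y, v y ∂μ)) ?_ ?_ ?_ ?_ ?_
  · refine key.trans (le_of_eq ?_)
    rw [Complex.ofReal_re, Real.mul_rpow (Real.rpow_nonneg hI0 _) (Real.rpow_nonneg hJ0 _),
      Real.mul_rpow hM (mul_nonneg hI0 hJ0), Real.mul_rpow hI0 hJ0, ← Real.rpow_mul hI0,
      ← Real.rpow_mul hJ0]
    have e : ∀ x : ℝ, 0 ≤ x → x ^ ((1 + θ) / 2) = x ^ (1 / 2 * (1 - θ)) * x ^ θ := by
      intro x hx
      rw [← Real.rpow_add_of_nonneg hx (by linarith) hθ0]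
      congr 1; ring
    rw [e _ hI0, e _ hJ0]
    ring
  · exact ⟨by simpa using hθ0, by simpa using hθ1⟩
  · refine DifferentiableOn.diffContOnCl (hdiff.mono ?_)
    intro z hz
    have hz' : z ∈ Complex.HadamardThreeLines.verticalClosedStrip 0 1 := by
      refine closure_minimal (t := Complex.HadamardThreeLines.verticalClosedStrip 0 1) ?_
        (isClosed_Icc.preimage Complex.continuous_re) hz
      exact preimage_mono Ioo_subset_Icc_self
    have h1 : 0 ≤ z.re := hz'.1
    have h2 : z.re ≤ 1 := hz'.2
    exact ⟨by linarith, by linarith⟩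
  · refine ⟨M * ∫ q : Y × Y, (u q.1 * v q.2) ^ (1 / 4 : ℝ) * (H * H) ∂μ.prod μ, ?_⟩
    rintro _ ⟨z, hz, rfl⟩
    have h1 : 0 ≤ z.re := hz.1
    have h2 : z.re ≤ 1 := hz.2
    refine (norm_integral_cpow_le hκM hh0 (by linarith) (hpow _ (by linarith))).trans ?_
    refine mul_le_mul_of_nonneg_left (integral_mono (hpow _ (by linarith)) (hint.mul_const _) ?_) hM
    intro q
    show (u q.1 * v q.2) ^ ((1 + z.re) / 2) ≤ (u q.1 * v q.2) ^ (1 / 4 : ℝ) * (H * H)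
    rw [show (1 + z.re) / 2 = 1 / 4 + (1 / 4 + z.re / 2) by ring,
      Real.rpow_add_of_nonneg (hh0 q) (by norm_num) (by linarith)]
    refine mul_le_mul_of_nonneg_left ?_ (Real.rpow_nonneg (hh0 q) _)
    calc _ ≤ (H * H) ^ (1 / 4 + z.re / 2) := Real.rpow_le_rpow (hh0 q) (hhH q) (by linarith)
      _ ≤ (H * H) ^ (1 : ℝ) := Real.rpow_le_rpow_of_exponent_le hHH (by linarith)
      _ = H * H := Real.rpow_one _
  · intro z hz
    exact norm_integral_mul_cpow_le_of_re_zero hL2 hσ hτ hσ1 hτ1 hu hv hu0 hv0 huH hvH hui hvi hz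
  · intro z hz
    have hz1 : z.re = 1 := hz
    refine (norm_integral_cpow_le hκM hh0 (by linarith) (hpow _ (by linarith))).trans (le_of_eq ?_)
    rw [← integral_prod_mul, hz1]
    norm_num

/-- Riesz–Thorin interpolation for a bounded bilinear kernel between an `L²` bound and the
supremum bound. -/
theorem norm_integral_kernel_mul_le_interpolated [SFinite μ] (hk : Measurable k) (hM : 0 ≤ M)
    (hkM : ∀ q, ‖k q‖ ≤ M)
    (hL2 : ∀ f g : Y → ℂ, Measurable f → Measurable g → Integrable f μ → Integrable g μ →
      Integrable (fun y => ‖f y‖ ^ 2) μ → Integrable (fun y => ‖g y‖ ^ 2) μ →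
      ‖∫ q, k q * (f q.1 * conj (g q.2)) ∂μ.prod μ‖ ≤
        (∫ y, ‖f y‖ ^ 2 ∂μ) ^ (1 / 2 : ℝ) * (∫ y, ‖g y‖ ^ 2 ∂μ) ^ (1 / 2 : ℝ))
    (hf : Measurable f) (hg : Measurable g) (hH : 1 ≤ H) (hfH : ∀ y, ‖f y‖ ≤ H)
    (hgH : ∀ y, ‖g y‖ ≤ H) (hp : 0 < p) (hθ0 : 0 ≤ θ) (hθ1 : θ ≤ 1) (hpθ : 1 / p = (1 + θ) / 2)
    (hfi : Integrable (fun y => ‖f y‖ ^ (p / 4)) μ)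
    (hgi : Integrable (fun y => ‖g y‖ ^ (p / 4)) μ) :
    ‖∫ q, k q * (f q.1 * conj (g q.2)) ∂μ.prod μ‖ ≤
      M ^ θ * (∫ y, ‖f y‖ ^ p ∂μ) ^ (1 / p) * (∫ y, ‖g y‖ ^ p ∂μ) ^ (1 / p) := by
  have hpt : p * ((1 + θ) / 2) = 1 := by rw [← hpθ]; field_simp
  have hsgn : ∀ f : Y → ℂ, ∀ y, ‖f y / (‖f y‖ : ℂ)‖ ≤ 1 := by
    intro f y
    rw [norm_div, Complex.norm_real, norm_norm]
    exact div_self_le_one _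
  have hrec : ∀ x : ℂ, x = x / (‖x‖ : ℂ) * ((‖x‖ ^ p : ℝ) : ℂ) ^ ((1 + (θ : ℂ)) / 2) := by
    intro x
    rcases eq_or_ne x 0 with rfl | hx
    · simp
    have hn : (‖x‖ : ℂ) ≠ 0 := by simpa using hx
    have : ((‖x‖ ^ p : ℝ) : ℂ) ^ ((1 + (θ : ℂ)) / 2) = (‖x‖ : ℂ) := by
      rw [show (1 + (θ : ℂ)) / 2 = (((1 + θ) / 2 : ℝ) : ℂ) by push_cast; ring,
        ← Complex.ofReal_cpow (Real.rpow_nonneg (norm_nonneg _) _),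
        ← Real.rpow_mul (norm_nonneg _), hpt, Real.rpow_one]
    rw [this]
    field_simp
  have key := norm_integral_mul_cpow_le_interpolated (μ := μ) (H := H ^ p) (θ := θ)
    (σ := fun y => f y / (‖f y‖ : ℂ))
    (τ := fun y => g y / (‖g y‖ : ℂ)) (u := fun y => ‖f y‖ ^ p) (v := fun y => ‖g y‖ ^ p)
    hk hM hkM hL2 (by fun_prop) (by fun_prop) (hsgn f) (hsgn g) (by fun_prop) (by fun_prop)
    (fun y => Real.rpow_nonneg (norm_nonneg _) _) (fun y => Real.rpow_nonneg (norm_nonneg _) _)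
    (Real.one_le_rpow hH hp.le)
    (fun y => Real.rpow_le_rpow (norm_nonneg _) (hfH y) hp.le)
    (fun y => Real.rpow_le_rpow (norm_nonneg _) (hgH y) hp.le)
    (hfi.congr (Eventually.of_forall fun y => ?_)) (hgi.congr (Eventually.of_forall fun y => ?_))
    hθ0 hθ1
  · rw [hpθ]
    refine le_trans (le_of_eq ?_) key
    congr 1
    refine integral_congr_ae (Eventually.of_forall fun q => ?_)
    show k q * (f q.1 * conj (g q.2)) = k q * (f q.1 / (‖f q.1‖ : ℂ) *
      conj (g q.2 / (‖g q.2‖ : ℂ))) * ((‖f q.1‖ ^ p * ‖g q.2‖ ^ p : ℝ) : ℂ) ^ ((1 + (θ : ℂ)) / 2)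
    conv_lhs => rw [hrec (f q.1), hrec (g q.2)]
    have e2 : (1 + (θ : ℂ)) / 2 = conj ((1 + (θ : ℂ)) / 2) := by
      rw [map_div₀, map_add, map_one, map_ofNat, Complex.conj_ofReal]
    have e3 : conj (((‖g q.2‖ ^ p : ℝ) : ℂ) ^ ((1 + (θ : ℂ)) / 2)) =
        ((‖g q.2‖ ^ p : ℝ) : ℂ) ^ ((1 + (θ : ℂ)) / 2) := by
      conv_lhs => rw [e2]
      exact conj_ofReal_cpow (Real.rpow_nonneg (norm_nonneg _) _) _
    rw [map_mul, e3, Complex.ofReal_mul, Complex.mul_cpow_ofReal_nonneg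
      (Real.rpow_nonneg (norm_nonneg _) _) (Real.rpow_nonneg (norm_nonneg _) _)]
    ring
  all_goals
    show ‖_‖ ^ (p / 4) = (‖_‖ ^ p) ^ (1 / 4 : ℝ)
    rw [← Real.rpow_mul (norm_nonneg _)]
    congr 1; ring

end

theorem lintegral_comp_abs (f : ℝ → ENNReal) :
    ∫⁻ u : ℝ, f |u| = 2 * ∫⁻ u in Ioi (0 : ℝ), f u := by
  rw [← lintegral_add_compl _ (measurableSet_Ioi (a := (0 : ℝ))), compl_Ioi, two_mul]
  congr 1
  · exact setLIntegral_congr_fun measurableSet_Ioi fun u hu => by rw [abs_of_pos hu]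
  · rw [← setLIntegral_congr (Iio_ae_eq_Iic (μ := volume) (a := (0 : ℝ)))]
    have h := (Measure.measurePreserving_neg (volume : Measure ℝ)).setLIntegral_comp_preimage_emb
      (MeasurableEquiv.neg ℝ).measurableEmbedding f (Ioi 0)
    rw [← h]
    have e : Neg.neg ⁻¹' Ioi (0 : ℝ) = Iio 0 := by ext u; simp
    rw [e]
    exact setLIntegral_congr_fun measurableSet_Iio fun u hu => by rw [abs_of_neg hu]

theorem lintegral_abs_rpow_near {γ R : ℝ} (hγ1 : γ < 1) (hR : 0 ≤ R) :
    ∫⁻ u : ℝ, (Iic R).indicator (fun x => ENNReal.ofReal (x ^ (-γ))) |u| =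
      ENNReal.ofReal (2 * (R ^ (1 - γ) / (1 - γ))) := by
  rw [lintegral_comp_abs, lintegral_indicator measurableSet_Iic, Measure.restrict_restrict
    measurableSet_Iic, inter_comm, Ioi_inter_Iic, ENNReal.ofReal_mul zero_le_two]
  congr 1
  · norm_num
  have hi : IntervalIntegrable (fun x : ℝ => x ^ (-γ)) volume 0 R :=
    intervalIntegral.intervalIntegrable_rpow' (by linarith)
  rw [intervalIntegrable_iff_integrableOn_Ioc_of_le hR] at hi
  rw [← ofReal_integral_eq_lintegral_ofReal hi, ← intervalIntegral.integral_of_le hR,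
    integral_rpow (Or.inl (by linarith)), Real.zero_rpow (by linarith)]
  · congr 1
    rw [sub_zero, show -γ + 1 = 1 - γ by ring]
  · filter_upwards [ae_restrict_mem measurableSet_Ioc] with x hx
    exact Real.rpow_nonneg hx.1.le _

theorem lintegral_abs_rpow_far {R : ℝ} (hR : 0 < R) :
    ∫⁻ u : ℝ, (Ioi R).indicator (fun x => ENNReal.ofReal (x ^ (-2 : ℝ))) |u| =
      ENNReal.ofReal (2 * R⁻¹) := by
  rw [lintegral_comp_abs, lintegral_indicator measurableSet_Ioi, Measure.restrict_restrict
    measurableSet_Ioi, Ioi_inter_Ioi, sup_of_le_left hR.le, ENNReal.ofReal_mul zero_le_two]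
  congr 1
  · norm_num
  have hi := integrableOn_Ioi_rpow_of_lt (a := (-2 : ℝ)) (by norm_num) hR
  rw [← ofReal_integral_eq_lintegral_ofReal hi, integral_Ioi_rpow_of_lt (by norm_num) hR]
  · congr 1
    norm_num
    exact Real.rpow_neg_one R
  · filter_upwards [ae_restrict_mem measurableSet_Ioi] with x hx
    exact Real.rpow_nonneg (hR.trans hx).le _

section

variable {γ P Λ h : ℝ} {φ : ℝ → ℝ}

theorem lintegral_sublevel_mul_abs_rpow_le (hφ : Measurable φ)
    (hγ0 : 0 < γ) (hγ1 : γ < 1) (hP : P = 2 / (2 - γ)) (hΛ : 0 < Λ)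
    (hφΛ : ∫⁻ s, ENNReal.ofReal (φ s) ^ P ≤ ENNReal.ofReal Λ) (hh : 0 < h) (t : ℝ) :
    ∫⁻ s, {s | φ s ≤ h}.indicator (fun s => ENNReal.ofReal (φ s)) s *
        ENNReal.ofReal (|t - s| ^ (-γ)) ≤
      ENNReal.ofReal ((2 / (1 - γ) + 2 ^ (γ / 2)) * Λ ^ (1 - γ) * h ^ (P - 1)) := by
  have h2γ : 0 < 2 - γ := by linarith
  have hP0 : 0 < P := by rw [hP]; positivity
  obtain ⟨R, hR⟩ : ∃ R, R = Λ * h ^ (-P) := ⟨_, rfl⟩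
  have hR0 : 0 < R := by rw [hR]; positivity
  obtain ⟨K₁, hK₁⟩ : ∃ K₁ : ℝ → ENNReal,
    K₁ = fun u => (Iic R).indicator (fun x => ENNReal.ofReal (x ^ (-γ))) |u| := ⟨_, rfl⟩
  obtain ⟨K₂, hK₂⟩ : ∃ K₂ : ℝ → ENNReal,
    K₂ = fun u => (Ioi R).indicator (fun x => ENNReal.ofReal (x ^ (-γ))) |u| := ⟨_, rfl⟩
  have hpm : Measurable fun x : ℝ => ENNReal.ofReal (x ^ (-γ)) := by fun_prop
  have hm₁ : Measurable K₁ := by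
    rw [hK₁]; exact (hpm.indicator measurableSet_Iic).comp measurable_norm
  have hm₂ : Measurable K₂ := by
    rw [hK₂]; exact (hpm.indicator measurableSet_Ioi).comp measurable_norm
  have hsub : Measurable fun s : ℝ => t - s := by fun_prop
  have hm₁' : Measurable fun s => K₁ (t - s) := hm₁.comp hsub
  have hm₂' : Measurable fun s => K₂ (t - s) := hm₂.comp hsub
  have hφm : Measurable fun s => ENNReal.ofReal (φ s) := by fun_prop
  have hsplit : ∀ s, {s | φ s ≤ h}.indicator (fun s => ENNReal.ofReal (φ s)) s *
      ENNReal.ofReal (|t - s| ^ (-γ)) ≤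
      ENNReal.ofReal h * K₁ (t - s) + ENNReal.ofReal (φ s) * K₂ (t - s) := by
    intro s
    by_cases hs : φ s ≤ h
    · rw [indicator_of_mem (by exact hs)]
      rcases le_or_gt |t - s| R with hts | hts
      · rw [hK₁]
        refine le_trans ?_ le_self_add
        show _ ≤ ENNReal.ofReal h * (Iic R).indicator _ |t - s|
        rw [indicator_of_mem (by exact hts)]
        gcongr
      · rw [hK₂]
        refine le_trans ?_ le_add_self
        show _ ≤ ENNReal.ofReal (φ s) * (Ioi R).indicator _ |t - s|
        rw [indicator_of_mem (by exact hts)]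
    · rw [indicator_of_notMem (by exact hs), zero_mul]
      exact zero_le
  have hnear : ∫⁻ s, ENNReal.ofReal h * K₁ (t - s) =
      ENNReal.ofReal (2 / (1 - γ) * Λ ^ (1 - γ) * h ^ (P - 1)) := by
    rw [lintegral_const_mul _ hm₁', lintegral_sub_left_eq_self K₁ t, hK₁,
      lintegral_abs_rpow_near hγ1 hR0.le, ← ENNReal.ofReal_mul hh.le]
    congr 1
    rw [hR, Real.mul_rpow hΛ.le (by positivity), ← Real.rpow_mul hh.le]
    have e : h ^ (P - 1) = h * h ^ (-P * (1 - γ)) := by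
      nth_rewrite 2 [← Real.rpow_one h]
      rw [← Real.rpow_add hh]
      congr 1
      rw [hP]
      field_simp
      ring
    rw [e]
    ring
  have hfar : ∫⁻ s, ENNReal.ofReal (φ s) * K₂ (t - s) ≤
      ENNReal.ofReal (2 ^ (γ / 2) * Λ ^ (1 - γ) * h ^ (P - 1)) := by
    have hconj : P.HolderConjugate (2 / γ) := by
      rw [Real.holderConjugate_iff]
      constructor
      · rw [hP, lt_div_iff₀ h2γ]; linarith
      · rw [hP]; field_simp; ring
    refine (ENNReal.lintegral_mul_le_Lp_mul_Lq volume hconj hφm.aemeasurable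
      hm₂'.aemeasurable).trans ?_
    have hK : ∫⁻ s, K₂ (t - s) ^ (2 / γ) = ENNReal.ofReal (2 * R⁻¹) := by
      rw [lintegral_sub_left_eq_self (fun u => K₂ u ^ (2 / γ)) t, ← lintegral_abs_rpow_far hR0]
      refine lintegral_congr fun u => ?_
      rw [hK₂]
      show (Ioi R).indicator _ |u| ^ (2 / γ) = _
      by_cases hu : R < |u|
      · rw [indicator_of_mem (by exact hu), indicator_of_mem (by exact hu),
          ENNReal.ofReal_rpow_of_nonneg (by positivity) (by positivity),
          ← Real.rpow_mul (abs_nonneg _)]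
        congr 2
        field_simp
      · rw [indicator_of_notMem (by exact hu), indicator_of_notMem (by exact hu),
          ENNReal.zero_rpow_of_pos (by positivity)]
    rw [hK]
    refine (mul_le_mul_left (ENNReal.rpow_le_rpow hφΛ (by positivity)) _).trans (le_of_eq ?_)
    rw [ENNReal.ofReal_rpow_of_pos hΛ, ENNReal.ofReal_rpow_of_pos (by positivity),
      ← ENNReal.ofReal_mul (by positivity)]
    congr 1
    have e1 : 1 / (2 / γ) = γ / 2 := by field_simp
    have e2 : 1 / P = 1 - γ / 2 := by rw [hP]; field_simp
    have e3 : R⁻¹ ^ (γ / 2) = Λ ^ (-(γ / 2)) * h ^ (P - 1) := by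
      rw [hR, mul_inv, Real.mul_rpow (by positivity) (by positivity), Real.inv_rpow hΛ.le,
        Real.rpow_neg hΛ.le, ← Real.rpow_neg hh.le, neg_neg, ← Real.rpow_mul hh.le]
      congr 2
      rw [hP]
      field_simp
      ring
    rw [e1, e2, Real.mul_rpow (by positivity) (by positivity), e3]
    have e4 : Λ ^ (1 - γ) = Λ ^ (1 - γ / 2) * Λ ^ (-(γ / 2)) := by
      rw [← Real.rpow_add hΛ]; congr 1; ring
    rw [e4]
    ring
  calc _ ≤ ∫⁻ s, (ENNReal.ofReal h * K₁ (t - s) + ENNReal.ofReal (φ s) * K₂ (t - s)) :=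
        lintegral_mono hsplit
    _ = (∫⁻ s, ENNReal.ofReal h * K₁ (t - s)) + ∫⁻ s, ENNReal.ofReal (φ s) * K₂ (t - s) :=
        lintegral_add_left (hm₁'.const_mul _) _
    _ ≤ _ := by
        rw [hnear]
        refine (add_le_add_right hfar _).trans (le_of_eq ?_)
        have : 0 < 1 - γ := by linarith
        rw [← ENNReal.ofReal_add (by positivity) (by positivity)]
        congr 1
        ring

/-- The Hardy–Littlewood–Sobolev inequality on the line in the diagonal case. -/
theorem lintegral_lintegral_mul_abs_rpow_le (hφ : Measurable φ) (hφ0 : ∀ t, 0 ≤ φ t)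
    (hγ0 : 0 < γ) (hγ1 : γ < 1) (hP : P = 2 / (2 - γ)) (hΛ : 0 ≤ Λ)
    (hφΛ : ∫⁻ s, ENNReal.ofReal (φ s) ^ P = ENNReal.ofReal Λ) :
    ∫⁻ t, ∫⁻ s, ENNReal.ofReal (φ t) * ENNReal.ofReal (φ s) * ENNReal.ofReal (|t - s| ^ (-γ)) ≤
      ENNReal.ofReal (2 * (2 / (1 - γ) + 2 ^ (γ / 2)) * Λ ^ (2 - γ)) := by
  have h2γ : 0 < 2 - γ := by linarith
  have h1γ : 0 < 1 - γ := by linarith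
  have hP0 : 0 < P := by rw [hP]; positivity
  have hφm : Measurable fun s => ENNReal.ofReal (φ s) := by fun_prop
  rcases hΛ.eq_or_lt with h0 | hΛ
  · rw [← h0, ENNReal.ofReal_zero, lintegral_eq_zero_iff (hφm.pow_const P)] at hφΛ
    refine le_trans (le_of_eq ?_) zero_le
    have hz : ∀ᵐ t, ENNReal.ofReal (φ t) = 0 := by
      filter_upwards [hφΛ] with t ht
      have := (ENNReal.rpow_eq_zero_iff_of_pos hP0).1 ht
      exact this
    refine (lintegral_congr_ae ?_).trans lintegral_zero
    filter_upwards [hz] with t ht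
    simp [ht]
  obtain ⟨A, hA⟩ : ∃ A, A = fun t s => ENNReal.ofReal (φ t) *
    ({s | φ s ≤ φ t}.indicator (fun s => ENNReal.ofReal (φ s)) s *
      ENNReal.ofReal (|t - s| ^ (-γ))) := ⟨_, rfl⟩
  have hAm : Measurable (Function.uncurry A) := by
    have e : Function.uncurry A = fun p : ℝ × ℝ => ENNReal.ofReal (φ p.1) *
        ({p : ℝ × ℝ | φ p.2 ≤ φ p.1}.indicator (fun p => ENNReal.ofReal (φ p.2)) p *
        ENNReal.ofReal (|p.1 - p.2| ^ (-γ))) := by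
      rw [hA]; rfl
    rw [e]
    have hset : MeasurableSet {p : ℝ × ℝ | φ p.2 ≤ φ p.1} :=
      measurableSet_le (by fun_prop) (by fun_prop)
    have h1 : Measurable fun p : ℝ × ℝ => ENNReal.ofReal (φ p.2) := by fun_prop
    have h2 : Measurable fun p : ℝ × ℝ => ENNReal.ofReal (φ p.1) := by fun_prop
    have h3 : Measurable fun p : ℝ × ℝ => ENNReal.ofReal (|p.1 - p.2| ^ (-γ)) := by fun_prop
    exact h2.mul ((h1.indicator hset).mul h3)
  have hle : ∀ t s, ENNReal.ofReal (φ t) * ENNReal.ofReal (φ s) *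
      ENNReal.ofReal (|t - s| ^ (-γ)) ≤ A t s + A s t := by
    intro t s
    rw [hA]
    rcases le_total (φ s) (φ t) with hts | hts
    · refine le_trans (le_of_eq ?_) le_self_add
      show _ = _ * ({s | φ s ≤ φ t}.indicator _ s * _)
      rw [indicator_of_mem (by exact hts), mul_assoc]
    · refine le_trans (le_of_eq ?_) le_add_self
      show _ = ENNReal.ofReal (φ s) * ({t | φ t ≤ φ s}.indicator
        (fun t => ENNReal.ofReal (φ t)) t * ENNReal.ofReal (|s - t| ^ (-γ)))
      rw [indicator_of_mem (by exact hts), abs_sub_comm s t, mul_comm (ENNReal.ofReal (φ t)),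
        mul_assoc]
  have hone : ∫⁻ t, ∫⁻ s, A t s ≤
      ENNReal.ofReal ((2 / (1 - γ) + 2 ^ (γ / 2)) * Λ ^ (1 - γ)) * ENNReal.ofReal Λ := by
    rw [← hφΛ, ← lintegral_const_mul _ (hφm.pow_const P)]
    refine lintegral_mono fun t => ?_
    rcases (hφ0 t).eq_or_lt with h0 | h0
    · have : ∀ s, A t s = 0 := by intro s; rw [hA]; simp [← h0]
      simp [this]
    have hm : Measurable fun s => {s | φ s ≤ φ t}.indicator (fun s => ENNReal.ofReal (φ s)) s *
        ENNReal.ofReal (|t - s| ^ (-γ)) := by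
      have hset : MeasurableSet {s | φ s ≤ φ t} := measurableSet_le hφ measurable_const
      have h3 : Measurable fun s : ℝ => ENNReal.ofReal (|t - s| ^ (-γ)) := by fun_prop
      exact (hφm.indicator hset).mul h3
    have e : ∫⁻ s, A t s = ENNReal.ofReal (φ t) *
        ∫⁻ s, {s | φ s ≤ φ t}.indicator (fun s => ENNReal.ofReal (φ s)) s *
          ENNReal.ofReal (|t - s| ^ (-γ)) := by
      rw [← lintegral_const_mul _ hm, hA]
    rw [e]
    refine (mul_le_mul_right (lintegral_sublevel_mul_abs_rpow_le hφ hγ0 hγ1 hP hΛ hφΛ.le h0 t)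
      _).trans (le_of_eq ?_)
    rw [← ENNReal.ofReal_mul h0.le, ENNReal.ofReal_rpow_of_pos h0,
      ← ENNReal.ofReal_mul (by positivity)]
    congr 1
    have e : φ t ^ P = φ t * φ t ^ (P - 1) := by
      nth_rewrite 2 [← Real.rpow_one (φ t)]
      rw [← Real.rpow_add h0]; congr 1; ring
    rw [e]
    ring
  have hswap : ∫⁻ t, ∫⁻ s, A s t = ∫⁻ t, ∫⁻ s, A t s :=
    lintegral_lintegral_swap (hAm.comp measurable_swap).aemeasurable
  calc _ ≤ ∫⁻ t, ∫⁻ s, (A t s + A s t) := lintegral_mono fun t => lintegral_mono fun s => hle t s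
    _ = (∫⁻ t, ∫⁻ s, A t s) + ∫⁻ t, ∫⁻ s, A s t := by
        rw [← lintegral_add_left]
        · refine lintegral_congr fun t => lintegral_add_left ?_ _
          exact hAm.comp measurable_prodMk_left
        · exact hAm.lintegral_prod_right'
    _ ≤ _ := by
        rw [hswap, ← two_mul]
        refine (mul_le_mul_right hone 2).trans (le_of_eq ?_)
        rw [← ENNReal.ofReal_mul (by positivity), show (2 : ENNReal) = ENNReal.ofReal 2 by norm_num,
          ← ENNReal.ofReal_mul zero_le_two]
        congr 1
        have e : Λ ^ (2 - γ) = Λ ^ (1 - γ) * Λ := by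
          nth_rewrite 3 [← Real.rpow_one Λ]
          rw [← Real.rpow_add hΛ]; congr 1; ring
        rw [e]
        ring

end

theorem integrable_one_add_sq_rpow_neg {k : ℝ} (hk : 1 / 2 < k) :
    Integrable fun y : ℝ => (1 + y ^ 2) ^ (-k) := by
  have h := integrable_rpow_neg_one_add_norm_sq (E := ℝ) (μ := volume) (r := 2 * k)
    (by simp; linarith)
  refine h.congr (Eventually.of_forall fun y => ?_)
  dsimp only
  rw [Real.norm_eq_abs, sq_abs]
  congr 1; ring

theorem integrable_one_add_sq_rpow_neg_powMeasure {a k : ℝ} (ha : 0 ≤ a) (hk : (a + 1) / 2 < k) :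
    Integrable (fun y : ℝ => (1 + y ^ 2) ^ (-k)) (powMeasure a) := by
  rw [integrable_powMeasure]
  have h := (integrable_one_add_sq_rpow_neg (k := k - a / 2) (by linarith)).integrableOn
    (s := Ioi 0)
  have hm : Measurable fun y : ℝ => y ^ a • (1 + y ^ 2) ^ (-k) := by
    simp only [smul_eq_mul]; fun_prop
  refine h.mono' hm.aestronglyMeasurable ?_
  filter_upwards [ae_restrict_mem measurableSet_Ioi] with y hy
  have hy0 : 0 < y := hy
  rw [smul_eq_mul, Real.norm_of_nonneg (by positivity)]
  have h1 : y ^ a ≤ (1 + y ^ 2) ^ (a / 2) := by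
    calc y ^ a = (y ^ 2) ^ (a / 2) := by
          rw [← Real.rpow_natCast y 2, ← Real.rpow_mul hy0.le]; congr 1; push_cast; ring
      _ ≤ _ := Real.rpow_le_rpow (by positivity) (by linarith) (by linarith)
  calc y ^ a * (1 + y ^ 2) ^ (-k) ≤ (1 + y ^ 2) ^ (a / 2) * (1 + y ^ 2) ^ (-k) := by gcongr
    _ = _ := by rw [← Real.rpow_add (by positivity)]; congr 1; ring

/-- Joint measurability together with polynomial decay of every order in both variables. -/
structure RapidlyDecaying (F : ℝ → ℝ → ℂ) : Prop where
  measurable : Measurable (Function.uncurry F)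
  decay : ∀ m : ℝ, 0 ≤ m → ∃ C : ℝ, 0 ≤ C ∧
    ∀ y t, ‖F y t‖ ≤ C * ((1 + y ^ 2) ^ (-m) * (1 + t ^ 2) ^ (-m))

namespace RapidlyDecaying

variable {F : ℝ → ℝ → ℂ} {a : ℝ}

theorem measurable_slice (hF : RapidlyDecaying F) (t : ℝ) : Measurable fun y => F y t :=
  hF.measurable.comp measurable_prodMk_right

theorem exists_norm_le (hF : RapidlyDecaying F) : ∃ H : ℝ, 1 ≤ H ∧ ∀ y t, ‖F y t‖ ≤ H := by
  obtain ⟨C, hC, h⟩ := hF.decay 0 le_rfl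
  refine ⟨max 1 C, le_max_left _ _, fun y t => (h y t).trans ?_⟩
  simp

theorem integral_norm_rpow_le (hF : RapidlyDecaying F) (ha : 0 ≤ a) {c j : ℝ} (hc : 0 < c)
    (hj : 0 ≤ j) : ∃ D : ℝ, 0 ≤ D ∧ ∀ t, Integrable (fun y => ‖F y t‖ ^ c) (powMeasure a) ∧
      ∫ y, ‖F y t‖ ^ c ∂powMeasure a ≤ D * (1 + t ^ 2) ^ (-j) := by
  obtain ⟨k, hk⟩ : ∃ k : ℝ, k = j + (a + 1) / 2 + 1 := ⟨_, rfl⟩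
  obtain ⟨C, hC, h⟩ := hF.decay (k / c) (by rw [hk]; positivity)
  have hi := integrable_one_add_sq_rpow_neg_powMeasure (k := k) ha (by linarith)
  have hle : ∀ y t, ‖F y t‖ ^ c ≤ (1 + y ^ 2) ^ (-k) * (C ^ c * (1 + t ^ 2) ^ (-k)) := by
    intro y t
    have e : ∀ x : ℝ, ((1 + x ^ 2) ^ (-(k / c))) ^ c = (1 + x ^ 2) ^ (-k) := by
      intro x
      rw [← Real.rpow_mul (by positivity)]
      congr 1; field_simp
    calc ‖F y t‖ ^ c ≤ (C * ((1 + y ^ 2) ^ (-(k / c)) * (1 + t ^ 2) ^ (-(k / c)))) ^ c :=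
          Real.rpow_le_rpow (norm_nonneg _) (h y t) hc.le
      _ = _ := by
          rw [Real.mul_rpow hC (by positivity), Real.mul_rpow (by positivity) (by positivity), e, e]
          ring
  refine ⟨(∫ y, (1 + y ^ 2) ^ (-k) ∂powMeasure a) * C ^ c, mul_nonneg
    (integral_nonneg fun y => by positivity) (by positivity), fun t => ?_⟩
  have hint : Integrable (fun y => ‖F y t‖ ^ c) (powMeasure a) := by
    refine (hi.mul_const (C ^ c * (1 + t ^ 2) ^ (-k))).mono'
      ((hF.measurable_slice t).norm.pow_const c).aestronglyMeasurable
      (Eventually.of_forall fun y => ?_)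
    rw [Real.norm_of_nonneg (by positivity)]
    exact hle y t
  refine ⟨hint, (integral_mono hint (hi.mul_const _) fun y => hle y t).trans ?_⟩
  rw [integral_mul_const, mul_assoc]
  refine mul_le_mul_of_nonneg_left (mul_le_mul_of_nonneg_left ?_ (by positivity))
    (integral_nonneg fun y => by positivity)
  exact Real.rpow_le_rpow_of_exponent_le (by nlinarith [sq_nonneg t]) (by linarith)

theorem integrable_norm_rpow (hF : RapidlyDecaying F) (ha : 0 ≤ a) {c : ℝ} (hc : 0 < c) (t : ℝ) :
    Integrable (fun y => ‖F y t‖ ^ c) (powMeasure a) := by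
  obtain ⟨D, -, h⟩ := hF.integral_norm_rpow_le ha hc le_rfl
  exact (h t).1

theorem integrable_slice (hF : RapidlyDecaying F) (ha : 0 ≤ a) (t : ℝ) :
    Integrable (fun y => F y t) (powMeasure a) := by
  have h := hF.integrable_norm_rpow ha one_pos t
  simp only [Real.rpow_one] at h
  exact (integrable_norm_iff (hF.measurable_slice t).aestronglyMeasurable).1 h

theorem measurable_integral_norm_rpow (hF : RapidlyDecaying F) (a p : ℝ) :
    Measurable fun t => ∫ y, ‖F y t‖ ^ p ∂powMeasure a := by
  have h : Measurable fun q : ℝ × ℝ => ‖F q.2 q.1‖ ^ p :=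
    ((hF.measurable.comp measurable_swap).norm).pow_const p
  exact h.stronglyMeasurable.integral_prod_right'.measurable

theorem integrable_integral_norm_rpow (hF : RapidlyDecaying F) (ha : 0 ≤ a) {p Q : ℝ} (hp : 0 < p)
    (hQ : 0 < Q) :
    Integrable fun t => ((∫ y, ‖F y t‖ ^ p ∂powMeasure a) ^ (1 / p)) ^ Q := by
  obtain ⟨D, hD, h⟩ := hF.integral_norm_rpow_le ha hp (j := p / Q) (by positivity)
  have hi := (integrable_one_add_sq_rpow_neg (k := 1) (by norm_num)).const_mul (D ^ (Q / p))
  refine hi.mono' (((hF.measurable_integral_norm_rpow a p).pow_const _).pow_const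
    _).aestronglyMeasurable (Eventually.of_forall fun t => ?_)
  have h0 : 0 ≤ ∫ y, ‖F y t‖ ^ p ∂powMeasure a := integral_nonneg fun y => by positivity
  rw [Real.norm_of_nonneg (by positivity), ← Real.rpow_mul h0, show 1 / p * Q = Q / p by ring]
  calc _ ≤ (D * (1 + t ^ 2) ^ (-(p / Q))) ^ (Q / p) :=
        Real.rpow_le_rpow h0 (h t).2 (by positivity)
    _ = _ := by
        rw [Real.mul_rpow hD (by positivity), ← Real.rpow_mul (by positivity)]
        congr 2
        field_simp

end RapidlyDecaying

theorem norm_integral_propagate_mul_conj_le {a δ t s θ p H : ℝ} {f g : ℝ → ℂ} (ha : 0 ≤ a)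
    (hδ : 0 < δ) (ht : t ≠ 0) (hs : s ≠ 0) (hts : t ≠ s) (hf : Measurable f) (hg : Measurable g)
    (hfi : Integrable f (powMeasure a)) (hgi : Integrable g (powMeasure a)) (hH : 1 ≤ H)
    (hfH : ∀ y, ‖f y‖ ≤ H) (hgH : ∀ y, ‖g y‖ ≤ H) (hp : 0 < p) (hθ0 : 0 ≤ θ) (hθ1 : θ ≤ 1)
    (hpθ : 1 / p = (1 + θ) / 2)
    (hfp : Integrable (fun y => ‖f y‖ ^ (p / 4)) (powMeasure a))
    (hgp : Integrable (fun y => ‖g y‖ ^ (p / 4)) (powMeasure a)) :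
    ‖∫ x, (Real.exp (-δ * x ^ 2) : ℂ) * (propagate a t f x * conj (propagate a s g x))
        ∂powMeasure a‖ ≤
      (2 ^ (-a) * (Real.Gamma ((a + 1) / 2))⁻¹) ^ θ * |t - s| ^ (-((a + 1) / 2 * θ)) *
        (∫ y, ‖f y‖ ^ p ∂powMeasure a) ^ (1 / p) * (∫ y, ‖g y‖ ^ p ∂powMeasure a) ^ (1 / p) := by
  have hG : 0 < Real.Gamma ((a + 1) / 2) := Real.Gamma_pos_of_pos (by linarith)
  rw [integral_propagate_mul_conj ha hδ hf hg hfi hgi]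
  have h := norm_integral_kernel_mul_le_interpolated (μ := powMeasure a) (θ := θ)
    (k := fun q : ℝ × ℝ => pairKernel a δ t s q.1 q.2)
    (measurable_pairKernel ha hδ t s) (by positivity)
    (fun q => norm_pairKernel_le ha hδ ht hs hts q.1 q.2)
    (fun f g hf hg hfi hgi hf2 hg2 =>
      norm_integral_pairKernel_mul_le ha hδ ht hs hf hg hfi hgi hf2 hg2)
    hf hg hH hfH hgH hp hθ0 hθ1 hpθ hfp hgp
  refine h.trans (le_of_eq ?_)
  rw [Real.mul_rpow (by positivity) (by positivity), ← Real.rpow_mul (abs_nonneg _),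
    show -((a + 1) / 2) * θ = -((a + 1) / 2 * θ) by ring]

section

variable {F : ℝ → ℝ → ℂ} {a ε δ θ p γ P : ℝ}

/-- The propagated slices `e^{itL} F(·, t)`, restricted to times `|t| > ε`. -/
noncomputable def truncatedPropagate (a ε : ℝ) (F : ℝ → ℝ → ℂ) (x t : ℝ) : ℂ :=
  {t : ℝ | ε < |t|}.indicator (fun t => propagate a t (fun y => F y t) x) t

theorem measurableSet_lt_abs (ε : ℝ) : MeasurableSet {t : ℝ | ε < |t|} :=
  measurableSet_lt measurable_const measurable_norm

theorem measurable_propagate_slice (ha : 0 ≤ a) (hF : Measurable (Function.uncurry F)) :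
    Measurable fun q : ℝ × ℝ => propagate a q.2 (fun y => F y q.2) q.1 := by
  have h1 : Measurable fun w : (ℝ × ℝ) × ℝ => propKernel a w.1.2 w.1.1 w.2 :=
    (measurable_propKernel ha).comp (g := fun p : ℝ × ℝ × ℝ => propKernel a p.1 p.2.1 p.2.2)
      (f := fun w : (ℝ × ℝ) × ℝ => (w.1.2, w.1.1, w.2)) (by fun_prop)
  have h2 : Measurable fun w : (ℝ × ℝ) × ℝ => F w.2 w.1.2 :=
    hF.comp (f := fun w : (ℝ × ℝ) × ℝ => (w.2, w.1.2)) (by fun_prop)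
  exact ((h1.mul h2).stronglyMeasurable.integral_prod_right' (ν := powMeasure a)).measurable

theorem measurable_truncatedPropagate (ha : 0 ≤ a) (hF : Measurable (Function.uncurry F)) :
    Measurable (Function.uncurry (truncatedPropagate a ε F)) := by
  have h := (measurable_propagate_slice ha hF).indicator
    ((measurableSet_lt_abs ε).preimage (measurable_snd (α := ℝ)))
  exact h

theorem exists_norm_truncatedPropagate_le (ha : 0 ≤ a) (hε : 0 < ε) (hF : RapidlyDecaying F) :
    ∃ N : ℝ → ℝ, Integrable N ∧ ∀ x t, ‖truncatedPropagate a ε F x t‖ ≤ N t := by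
  obtain ⟨D, hD, h⟩ := hF.integral_norm_rpow_le ha one_pos zero_le_one
  have hG : 0 < Real.Gamma ((a + 1) / 2) := Real.Gamma_pos_of_pos (by linarith)
  refine ⟨fun t => 2 ^ (1 - (a + 1) / 2) * (2 * ε) ^ (-((a + 1) / 2)) *
    (Real.Gamma ((a + 1) / 2))⁻¹ * (D * (1 + t ^ 2) ^ (-1 : ℝ)),
    ((integrable_one_add_sq_rpow_neg (by norm_num)).const_mul _).const_mul _, fun x t => ?_⟩
  unfold truncatedPropagate
  by_cases ht : ε < |t|
  · rw [indicator_of_mem (by exact ht)]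
    refine (norm_propagate_le ha (hF.integrable_slice ha t) x).trans ?_
    have h1 := (h t).2
    simp only [Real.rpow_one] at h1
    refine mul_le_mul (mul_le_mul_of_nonneg_right ?_ (by positivity)) h1
      (integral_nonneg fun y => norm_nonneg _) (by positivity)
    rw [norm_propCoeff]
    refine mul_le_mul_of_nonneg_left ?_ (by positivity)
    exact Real.rpow_le_rpow_of_nonpos (by positivity) (by linarith) (by linarith)
  · rw [indicator_of_notMem (by exact ht), norm_zero]
    positivity

theorem enorm_integral_truncatedPropagate_mul_conj_le (ha : 0 ≤ a) (hδ : 0 < δ) (hε : 0 < ε)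
    (hF : RapidlyDecaying F) (hp : 0 < p) (hθ0 : 0 ≤ θ) (hθ1 : θ ≤ 1)
    (hpθ : 1 / p = (1 + θ) / 2) (hγ : γ = (a + 1) / 2 * θ) {t s : ℝ} (hts : t ≠ s) :
    ‖∫ x, (Real.exp (-δ * x ^ 2) : ℂ) *
        (truncatedPropagate a ε F x t * conj (truncatedPropagate a ε F x s)) ∂powMeasure a‖ₑ ≤
      ENNReal.ofReal ((2 ^ (-a) * (Real.Gamma ((a + 1) / 2))⁻¹) ^ θ) *
        (ENNReal.ofReal ((∫ y, ‖F y t‖ ^ p ∂powMeasure a) ^ (1 / p)) *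
        ENNReal.ofReal ((∫ y, ‖F y s‖ ^ p ∂powMeasure a) ^ (1 / p)) *
        ENNReal.ofReal (|t - s| ^ (-γ))) := by
  have hG : 0 < Real.Gamma ((a + 1) / 2) := Real.Gamma_pos_of_pos (by linarith)
  unfold truncatedPropagate
  by_cases ht : ε < |t|
  swap
  · simp [indicator_of_notMem (show t ∉ {t : ℝ | ε < |t|} from ht)]
  by_cases hs : ε < |s|
  swap
  · simp [indicator_of_notMem (show s ∉ {t : ℝ | ε < |t|} from hs)]
  simp only [indicator_of_mem (show t ∈ {t : ℝ | ε < |t|} from ht),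
    indicator_of_mem (show s ∈ {t : ℝ | ε < |t|} from hs)]
  obtain ⟨H, hH, hb⟩ := hF.exists_norm_le
  have h := norm_integral_propagate_mul_conj_le (t := t) (s := s) ha hδ
    (abs_pos.1 (hε.trans ht)) (abs_pos.1 (hε.trans hs)) hts
    (hF.measurable_slice t) (hF.measurable_slice s) (hF.integrable_slice ha t)
    (hF.integrable_slice ha s) hH (fun y => hb y t) (fun y => hb y s) hp hθ0 hθ1 hpθ
    (hF.integrable_norm_rpow ha (by positivity) t) (hF.integrable_norm_rpow ha (by positivity) s)
  rw [← ofReal_norm]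
  have h0 : ∀ t, 0 ≤ (∫ y, ‖F y t‖ ^ p ∂powMeasure a) ^ (1 / p) := fun t =>
    Real.rpow_nonneg (integral_nonneg fun y => by positivity) _
  rw [← ENNReal.ofReal_mul (h0 t), ← ENNReal.ofReal_mul (mul_nonneg (h0 t) (h0 s)),
    ← ENNReal.ofReal_mul (by positivity)]
  refine ENNReal.ofReal_le_ofReal (h.trans (le_of_eq ?_))
  rw [hγ]
  ring

theorem lintegral_weighted_truncatedPropagate_le (ha : 0 ≤ a) (hδ : 0 < δ) (hε : 0 < ε)
    (hF : RapidlyDecaying F) (hp : 0 < p) (hθ0 : 0 ≤ θ) (hθ1 : θ ≤ 1)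
    (hpθ : 1 / p = (1 + θ) / 2) (hγ : γ = (a + 1) / 2 * θ) (hγ0 : 0 < γ) (hγ1 : γ < 1)
    (hP : P = 2 / (2 - γ)) :
    ∫⁻ x, ENNReal.ofReal (Real.exp (-δ * x ^ 2) * ‖∫ t, truncatedPropagate a ε F x t‖ ^ 2)
        ∂powMeasure a ≤
      ENNReal.ofReal ((2 ^ (-a) * (Real.Gamma ((a + 1) / 2))⁻¹) ^ θ *
        (2 * (2 / (1 - γ) + 2 ^ (γ / 2)) *
        (∫ t, ((∫ y, ‖F y t‖ ^ p ∂powMeasure a) ^ (1 / p)) ^ P) ^ (2 - γ))) := by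
  have hG : 0 < Real.Gamma ((a + 1) / 2) := Real.Gamma_pos_of_pos (by linarith)
  have hP0 : 0 < P := by
    have : 0 < 2 - γ := by linarith
    rw [hP]; positivity
  obtain ⟨N, hN, hTN⟩ := exists_norm_truncatedPropagate_le ha hε hF
  have hTm := measurable_truncatedPropagate (ε := ε) ha hF.measurable
  have hw := integrable_exp_neg_mul_sq_powMeasure (s := a) (by linarith) hδ
  have hIm : Measurable fun x => ∫ t, truncatedPropagate a ε F x t :=
    hTm.stronglyMeasurable.integral_prod_right.measurable
  have hIle : ∀ x, ‖∫ t, truncatedPropagate a ε F x t‖ ≤ ∫ t, N t := fun x =>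
    norm_integral_le_of_norm_le hN (Eventually.of_forall fun t => hTN x t)
  have hint : Integrable (fun x => Real.exp (-δ * x ^ 2) *
      ‖∫ t, truncatedPropagate a ε F x t‖ ^ 2) (powMeasure a) := by
    refine (hw.mul_const ((∫ t, N t) ^ 2)).mono'
      (hw.aestronglyMeasurable.mul (hIm.norm.pow_const 2).aestronglyMeasurable)
      (Eventually.of_forall fun x => ?_)
    rw [Real.norm_of_nonneg (by positivity)]
    exact mul_le_mul_of_nonneg_left (pow_le_pow_left₀ (norm_nonneg _) (hIle x) 2)
      (Real.exp_pos _).le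
  rw [← ofReal_integral_eq_lintegral_ofReal hint (Eventually.of_forall fun x => by positivity)]
  have hE := integral_weighted_product hw hTm hTm hN hN hTN hTN
  have hEi := integrable_integral_weighted_product hw hTm hTm hN hN hTN hTN
  have e0 : ((∫ x, Real.exp (-δ * x ^ 2) * ‖∫ t, truncatedPropagate a ε F x t‖ ^ 2 ∂powMeasure a :
      ℝ) : ℂ) = ∫ x, (Real.exp (-δ * x ^ 2) : ℂ) * ((∫ t, truncatedPropagate a ε F x t) *
        conj (∫ t, truncatedPropagate a ε F x t)) ∂powMeasure a := by
    rw [← integral_complex_ofReal]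
    refine integral_congr_ae (Eventually.of_forall fun x => ?_)
    dsimp only
    rw [Complex.mul_conj, Complex.normSq_eq_norm_sq]
    push_cast
    ring
  have e1 : ENNReal.ofReal (∫ x, Real.exp (-δ * x ^ 2) *
      ‖∫ t, truncatedPropagate a ε F x t‖ ^ 2 ∂powMeasure a) =
      ‖((∫ x, Real.exp (-δ * x ^ 2) * ‖∫ t, truncatedPropagate a ε F x t‖ ^ 2 ∂powMeasure a :
      ℝ) : ℂ)‖ₑ := by
    rw [← ofReal_norm, Complex.norm_real,
      Real.norm_of_nonneg (integral_nonneg fun x => by positivity)]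
  rw [e1, e0, hE]
  refine (enorm_integral_le_lintegral_enorm _).trans ?_
  rw [lintegral_prod _ hEi.aestronglyMeasurable.enorm]
  obtain ⟨φ, hφ⟩ : ∃ φ : ℝ → ℝ, φ = fun t => (∫ y, ‖F y t‖ ^ p ∂powMeasure a) ^ (1 / p) :=
    ⟨_, rfl⟩
  have hφm : Measurable φ := by
    rw [hφ]; exact (hF.measurable_integral_norm_rpow a p).pow_const _
  have hφ0 : ∀ t, 0 ≤ φ t := fun t => by
    rw [hφ]; exact Real.rpow_nonneg (integral_nonneg fun y => by positivity) _
  have hφi : Integrable fun t => φ t ^ P := by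
    rw [hφ]; exact hF.integrable_integral_norm_rpow ha hp hP0
  have hΛ : ∫⁻ s, ENNReal.ofReal (φ s) ^ P = ENNReal.ofReal (∫ t, φ t ^ P) := by
    rw [ofReal_integral_eq_lintegral_ofReal hφi
      (Eventually.of_forall fun t => Real.rpow_nonneg (hφ0 t) _)]
    exact lintegral_congr fun t => ENNReal.ofReal_rpow_of_nonneg (hφ0 t) hP0.le
  have hls := lintegral_lintegral_mul_abs_rpow_le hφm hφ0 hγ0 hγ1 hP
    (integral_nonneg fun t => Real.rpow_nonneg (hφ0 t) _) hΛ
  have hfin : ∫ t, ((∫ y, ‖F y t‖ ^ p ∂powMeasure a) ^ (1 / p)) ^ P = ∫ t, φ t ^ P := by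
    rw [hφ]
  rw [hfin, ENNReal.ofReal_mul (by positivity)]
  refine le_trans ?_ (mul_le_mul_right hls _)
  have hm2 : ∀ t, Measurable fun s => ENNReal.ofReal (φ t) * ENNReal.ofReal (φ s) *
      ENNReal.ofReal (|t - s| ^ (-γ)) := by
    intro t; fun_prop
  have hm3 : Measurable fun q : ℝ × ℝ => ENNReal.ofReal (φ q.1) * ENNReal.ofReal (φ q.2) *
      ENNReal.ofReal (|q.1 - q.2| ^ (-γ)) := by fun_prop
  rw [← lintegral_const_mul _ hm3.lintegral_prod_right']
  refine lintegral_mono fun t => ?_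
  rw [← lintegral_const_mul _ (hm2 t)]
  refine lintegral_mono_ae ?_
  filter_upwards [Measure.ae_ne volume t] with s hs
  rw [hφ]
  exact enorm_integral_truncatedPropagate_mul_conj_le ha hδ hε hF hp hθ0 hθ1 hpθ hγ hs.symm

theorem tendsto_integral_truncatedPropagate {x : ℝ} {u : ℕ → ℝ} (hu : Tendsto u atTop (nhds 0))
    (hi : Integrable fun t => propagate a t (fun y => F y t) x) :
    Tendsto (fun n => ∫ t, truncatedPropagate a (u n) F x t) atTop
      (nhds (∫ t, propagate a t (fun y => F y t) x)) := by
  refine tendsto_integral_of_dominated_convergence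
    (fun t => ‖propagate a t (fun y => F y t) x‖)
    (fun n => hi.aestronglyMeasurable.indicator (measurableSet_lt_abs _)) hi.norm
    (fun n => Eventually.of_forall fun t => norm_indicator_le_norm_self _ _) ?_
  filter_upwards [Measure.ae_ne volume (0 : ℝ)] with t ht
  have h := hu.eventually (gt_mem_nhds (abs_pos.2 ht))
  refine tendsto_const_nhds.congr' ?_
  filter_upwards [h] with n hn
  unfold truncatedPropagate
  rw [indicator_of_mem (by exact hn)]

theorem lintegral_integral_propagate_le (ha : 0 ≤ a)
    (hF : RapidlyDecaying F) (hp : 0 < p) (hθ0 : 0 ≤ θ) (hθ1 : θ ≤ 1)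
    (hpθ : 1 / p = (1 + θ) / 2) (hγ : γ = (a + 1) / 2 * θ) (hγ0 : 0 < γ) (hγ1 : γ < 1)
    (hP : P = 2 / (2 - γ)) :
    ∫⁻ x, ENNReal.ofReal (‖∫ t, propagate a t (fun y => F y t) x‖ ^ 2) ∂powMeasure a ≤
      ENNReal.ofReal ((2 ^ (-a) * (Real.Gamma ((a + 1) / 2))⁻¹) ^ θ *
        (2 * (2 / (1 - γ) + 2 ^ (γ / 2)) *
        (∫ t, ((∫ y, ‖F y t‖ ^ p ∂powMeasure a) ^ (1 / p)) ^ P) ^ (2 - γ))) := by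
  obtain ⟨u, hu⟩ : ∃ u : ℕ → ℝ, u = fun n : ℕ => 1 / ((n : ℝ) + 1) := ⟨_, rfl⟩
  have hu0 : ∀ n, 0 < u n := fun n => by rw [hu]; positivity
  have hut : Tendsto u atTop (nhds 0) := by
    rw [hu]; exact tendsto_one_div_add_atTop_nhds_zero_nat
  obtain ⟨A, hA⟩ : ∃ A : ℕ → ℝ → ENNReal, A = fun n x =>
    ENNReal.ofReal (Real.exp (-u n * x ^ 2) * ‖∫ t, truncatedPropagate a (u n) F x t‖ ^ 2) :=
    ⟨_, rfl⟩
  have hAm : ∀ n, Measurable (A n) := by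
    intro n
    rw [hA]
    have hm : Measurable fun x => ∫ t, truncatedPropagate a (u n) F x t :=
      (measurable_truncatedPropagate (ε := u n) ha
        hF.measurable).stronglyMeasurable.integral_prod_right.measurable
    have hm2 : Measurable fun x => Real.exp (-u n * x ^ 2) *
      ‖∫ t, truncatedPropagate a (u n) F x t‖ ^ 2 := by fun_prop
    exact hm2.ennreal_ofReal
  have hpt : ∀ x, ENNReal.ofReal (‖∫ t, propagate a t (fun y => F y t) x‖ ^ 2) ≤
      liminf (fun n => A n x) atTop := by
    intro x
    by_cases hi : Integrable fun t => propagate a t (fun y => F y t) x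
    · have h1 := tendsto_integral_truncatedPropagate (a := a) hut hi
      have h2 : Tendsto (fun n => Real.exp (-u n * x ^ 2)) atTop (nhds 1) := by
        have : Tendsto (fun n => -u n * x ^ 2) atTop (nhds (-0 * x ^ 2)) :=
          (hut.neg).mul_const _
        rw [neg_zero, zero_mul] at this
        have h := (Real.continuous_exp.tendsto 0).comp this
        rw [Real.exp_zero] at h
        exact h
      have h3 := ENNReal.tendsto_ofReal (h2.mul (h1.norm.pow 2))
      rw [one_mul] at h3
      have h4 : Tendsto (fun n => A n x) atTop
          (nhds (ENNReal.ofReal (‖∫ t, propagate a t (fun y => F y t) x‖ ^ 2))) := by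
        rw [hA]; exact h3
      exact h4.liminf_eq.ge
    · rw [integral_undef hi]
      simp
  calc _ ≤ ∫⁻ x, liminf (fun n => A n x) atTop ∂powMeasure a := lintegral_mono hpt
    _ ≤ liminf (fun n => ∫⁻ x, A n x ∂powMeasure a) atTop := lintegral_liminf_le hAm
    _ ≤ _ := by
        refine liminf_le_of_le (by isBoundedDefault) fun b hb => ?_
        obtain ⟨n, hn⟩ := hb.exists
        refine hn.trans ?_
        rw [hA]
        exact lintegral_weighted_truncatedPropagate_le ha (hu0 n) (hu0 n) hF hp hθ0 hθ1 hpθ hγ hγ0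
          hγ1 hP

end

theorem SPlusT.rapidlyDecaying {F : ℝ → ℝ → ℂ} (hF : SPlusT F) :
    RapidlyDecaying fun y t => (Ioi 0).indicator (fun y => F y t) y := by
  classical
  refine ⟨?_, fun m hm => ?_⟩
  · have hs : MeasurableSet (Ioi (0 : ℝ) ×ˢ (univ : Set ℝ)) := measurableSet_Ioi.prod .univ
    have h := hF.1.continuousOn.measurable_piecewise (g := fun _ => 0) continuousOn_const hs
    convert! h using 1
    ext ⟨y, t⟩
    by_cases hy : 0 < y <;> simp [Function.uncurry, Set.piecewise, hy]
  · obtain ⟨C, hC⟩ := hF.2 ⌈4 * m⌉₊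
    have hC' : ∀ y > (0 : ℝ), ∀ t, (1 + y ^ 2 + t ^ 2) ^ ((⌈4 * m⌉₊ : ℝ) / 2) * ‖F y t‖ ≤ C := by
      intro y hy t
      simpa [DxIter, DtIter] using hC 0 0 (by omega) y hy t
    have hC0 : 0 ≤ C := le_trans (by positivity) (hC' 1 one_pos 0)
    refine ⟨C, hC0, fun y t => ?_⟩
    by_cases hy : 0 < y
    swap
    · rw [indicator_of_notMem (by exact hy), norm_zero]
      positivity
    rw [indicator_of_mem (by exact hy), Real.rpow_neg (by positivity), Real.rpow_neg (by positivity),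
      ← mul_inv, ← div_eq_mul_inv, le_div_iff₀ (by positivity), mul_comm]
    refine le_trans (mul_le_mul_of_nonneg_right ?_ (norm_nonneg _)) (hC' y hy t)
    have h1 : 1 ≤ 1 + y ^ 2 + t ^ 2 := by nlinarith [sq_nonneg y, sq_nonneg t]
    calc (1 + y ^ 2) ^ m * (1 + t ^ 2) ^ m ≤ (1 + y ^ 2 + t ^ 2) ^ m * (1 + y ^ 2 + t ^ 2) ^ m := by
          refine mul_le_mul (Real.rpow_le_rpow (by positivity) ?_ hm)
            (Real.rpow_le_rpow (by positivity) ?_ hm) (by positivity) (by positivity) <;>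
          nlinarith [sq_nonneg y, sq_nonneg t]
      _ = (1 + y ^ 2 + t ^ 2) ^ (m + m) := (Real.rpow_add (by positivity) _ _).symm
      _ ≤ _ := Real.rpow_le_rpow_of_exponent_le h1 (by linarith [Nat.le_ceil (4 * m)])

theorem LrA_eq_integral_powMeasure (a r : ℝ) (f : ℝ → ℂ) :
    LrA a r f = (∫ y, ‖(Ioi 0).indicator f y‖ ^ r ∂powMeasure a) ^ (1 / r) := by
  rw [LrA, integral_powMeasure]
  congr 1
  refine setIntegral_congr_fun measurableSet_Ioi fun y hy => ?_
  rw [indicator_of_mem hy, smul_eq_mul, mul_comm]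

theorem integral_Skernel_eq_integral_propagate {a x : ℝ} (hx : 0 < x) (F : ℝ → ℝ → ℂ) :
    ∫ t : ℝ, ∫ y in Ioi (0:ℝ), Skernel a x y (-t) * F y t * ((y ^ a : ℝ) : ℂ) =
      ∫ t, propagate a t (fun y => (Ioi 0).indicator (fun y => F y t) y) x := by
  refine integral_congr_ae ?_
  filter_upwards [Measure.ae_ne volume (0 : ℝ)] with t ht
  rw [propagate, integral_powMeasure]
  refine setIntegral_congr_fun measurableSet_Ioi fun y hy => ?_
  rw [indicator_of_mem hy, Skernel_neg_eq_propKernel ht hx hy, Complex.real_smul, mul_comm]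

/-- Restriction-type estimate for `T_a`: for `a ≥ 0` and an `a`-admissible pair `(q,r)`,
`‖T_a(F)‖_{L²_a} ≤ C(a,r) ‖F‖_{L^{q'}_t L^{r'}_a}` for `F ∈ 𝕊⁺`. -/
theorem Ta_estimate (a q r : ℝ) (ha : 0 ≤ a) (hadm : Admissible a q r) :
    ∃ C > (0:ℝ), ∀ F : ℝ → ℝ → ℂ, SPlusT F →
      LrA a 2 (fun x =>
          ∫ t : ℝ, ∫ y in Ioi (0:ℝ), Skernel a x y (-t) * F y t * ((y ^ a : ℝ) : ℂ)) ≤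
        C * mixedNorm a (q / (q - 1)) (r / (r - 1)) F := by
  obtain ⟨hr, hra, hq⟩ := hadm
  obtain ⟨γ, hγq⟩ : ∃ γ, γ = 2 / q := ⟨_, rfl⟩
  obtain ⟨θ, hθ⟩ : ∃ θ, θ = 1 - 2 / r := ⟨_, rfl⟩
  have hr0 : 0 < r := by linarith
  have hir : 2 / r < 1 := by rw [div_lt_one hr0]; exact hr
  have hir0 : 0 < 2 / r := by positivity
  have hγθ : γ = (a + 1) / 2 * θ := by rw [hγq, hq, hθ]; ring
  have hγ0 : 0 < γ := by rw [hγθ]; exact mul_pos (by linarith) (by linarith)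
  have hγ1 : γ < 1 := by
    rw [hγθ]
    rcases le_or_gt a 1 with h1 | h1
    · have : (a + 1) / 2 * θ ≤ 1 * θ := mul_le_mul_of_nonneg_right (by linarith) (by linarith)
      linarith
    · have h := hra h1
      rw [lt_div_iff₀ (by linarith)] at h
      have h2 : (a + 1) / 2 * θ = (a + 1) / 2 - (a + 1) / r := by rw [hθ]; ring
      have h3 : (a - 1) / 2 < (a + 1) / r := by
        rw [div_lt_div_iff₀ two_pos hr0]; linarith
      linarith
  have hq0 : 0 < q := by
    by_contra hn
    have : 2 / q ≤ 0 := div_nonpos_of_nonneg_of_nonpos zero_le_two (by linarith)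
    linarith
  have hq2 : 2 < q := by
    rw [hγq, div_lt_one hq0] at hγ1
    exact hγ1
  have hP : q / (q - 1) = 2 / (2 - γ) := by
    have h1 : q - 1 ≠ 0 := by linarith
    have h2 : 2 - 2 / q ≠ 0 := by rw [← hγq]; linarith
    rw [hγq, div_eq_div_iff h1 h2]
    field_simp
  have hp0 : 0 < r / (r - 1) := div_pos hr0 (by linarith)
  have hpθ : 1 / (r / (r - 1)) = (1 + θ) / 2 := by rw [hθ]; field_simp; ring
  have hG : 0 < Real.Gamma ((a + 1) / 2) := Real.Gamma_pos_of_pos (by linarith)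
  have h1γ : 0 < 1 - γ := by linarith
  obtain ⟨K, hK⟩ : ∃ K, K = (2 ^ (-a) * (Real.Gamma ((a + 1) / 2))⁻¹) ^ θ *
    (2 * (2 / (1 - γ) + 2 ^ (γ / 2))) := ⟨_, rfl⟩
  have hK0 : 0 < K := by rw [hK]; positivity
  refine ⟨K ^ (1 / 2 : ℝ), by positivity, fun F hF => ?_⟩
  have hR := hF.rapidlyDecaying
  have key := lintegral_integral_propagate_le ha hR hp0 (by linarith) (by linarith) hpθ hγθ hγ0 hγ1
    hP
  simp only [← LrA_eq_integral_powMeasure a (r / (r - 1))] at key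
  have hT : LrA a 2 (fun x =>
      ∫ t : ℝ, ∫ y in Ioi (0:ℝ), Skernel a x y (-t) * F y t * ((y ^ a : ℝ) : ℂ)) =
      (∫ x, ‖∫ t, propagate a t (fun y => (Ioi 0).indicator (fun y => F y t) y) x‖ ^ 2
        ∂powMeasure a) ^ (1 / 2 : ℝ) := by
    rw [LrA_eq_integral_powMeasure]
    congr 1
    refine integral_congr_ae ?_
    filter_upwards [ae_powMeasure_pos a] with x hx
    rw [indicator_of_mem (by exact hx), integral_Skernel_eq_integral_propagate hx, Real.rpow_two]
  have hL0 : 0 ≤ ∫ t, LrA a (r / (r - 1)) (fun x => F x t) ^ (q / (q - 1)) :=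
    integral_nonneg fun t => Real.rpow_nonneg (by
      rw [LrA_eq_integral_powMeasure]
      exact Real.rpow_nonneg (integral_nonneg fun y => by positivity) _) _
  have hTm : Measurable fun x =>
      ∫ t, propagate a t (fun y => (Ioi 0).indicator (fun y => F y t) y) x :=
    ((measurable_propagate_slice ha hR.measurable).stronglyMeasurable.integral_prod_right').measurable
  rw [hT, mixedNorm, integral_eq_lintegral_of_nonneg_ae
    (Eventually.of_forall fun x => by positivity) (hTm.norm.pow_const 2).aestronglyMeasurable]
  have h2 := ENNReal.toReal_mono ENNReal.ofReal_ne_top key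
  rw [← mul_assoc, ← hK, ENNReal.toReal_ofReal (mul_nonneg hK0.le (Real.rpow_nonneg hL0 _))] at h2
  refine (Real.rpow_le_rpow ENNReal.toReal_nonneg h2 (by norm_num)).trans (le_of_eq ?_)
  rw [Real.mul_rpow hK0.le (Real.rpow_nonneg hL0 _), ← Real.rpow_mul hL0]
  congr 2
  rw [hP]
  field_simp
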